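/- arXiv:1512.06798 — 2 statements merged into one kernel-verified Lean document; each statement's English description precedes it below -/
import Mathlib

section
/- There is a homeomorphism from 𝓜_Ω to 𝒲_Ω. Concretely, for μ a probability measure on Σ_Ω choose a measurable φ:[0,1)→Σ_Ω with μ = φ(λ) (the pushforward of Lebesgue measure) and set w_μ(x,y) = (φ(x))(y); then the map sending the cut□-equivalence class of μ to the δ_□-equivalence class of w_μ is a well-defined homeomorphism 𝓜_Ω → 𝒲_Ω. -/
open MeasureTheory Set Filter Topology

noncomputable section

namespace Paper

/-- Lebesgue measure restricted to `[0,1)`, representing the unit interval. -/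
def lam01 : Measure ℝ := volume.restrict (Set.Ico (0:ℝ) 1)

instance : IsProbabilityMeasure lam01 :=
  ⟨by simp [lam01, Real.volume_Ico]⟩

variable (Ω : Type) [Fintype Ω]

/-- The simplex `P(Ω) ⊆ ℝ^Ω` of probability vectors. -/
def simplex : Set (Ω → ℝ) := {p | (∀ ω, 0 ≤ p ω) ∧ ∑ ω, p ω = 1}

/-- `Σ_Ω = L¹([0,1), P(Ω))`: elements of `L¹([0,1), ℝ^Ω)` taking values in the simplex a.e. -/
def SigmaSp := {f : MeasureTheory.Lp (Ω → ℝ) 1 lam01 // ∀ᵐ x ∂lam01, f x ∈ simplex Ω}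

instance : TopologicalSpace (SigmaSp Ω) := by unfold SigmaSp; infer_instance
instance : MeasurableSpace (SigmaSp Ω) := borel _
instance : BorelSpace (SigmaSp Ω) := ⟨rfl⟩

/-- Evaluation of (a representative of) an element of `Σ_Ω`. -/
def ev (f : SigmaSp Ω) (x : ℝ) : Ω → ℝ := f.1 x

/-- Probability measures on `Σ_Ω`. -/
abbrev PM := ProbabilityMeasure (SigmaSp Ω)

/-- `γ` is a coupling of `μ` and `ν`. -/
def IsCoupling (μ ν : PM Ω) (γ : Measure (SigmaSp Ω × SigmaSp Ω)) : Prop :=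
  γ.map Prod.fst = (μ : Measure (SigmaSp Ω)) ∧ γ.map Prod.snd = (ν : Measure (SigmaSp Ω))

/-- Total variation norm of a vector in `ℝ^Ω`. -/
def tv (v : Ω → ℝ) : ℝ := (∑ ω, |v ω|) / 2

/-- The inner `sup` of the cut metric, for a given coupling `γ` and rearrangement `s`. -/
def cutPair (γ : Measure (SigmaSp Ω × SigmaSp Ω)) (s : ℝ → ℝ) : ℝ :=
  ⨆ (B : Set (SigmaSp Ω × SigmaSp Ω)) (_ : MeasurableSet B) (U : Set ℝ) (_ : MeasurableSet U),
    tv Ω (fun ω => ∫ p in B, (∫ x in U, (ev Ω p.1 x ω - ev Ω p.2 (s x) ω) ∂lam01) ∂γ)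

/-- The strong cut metric `Cut□`. -/
def CutD (μ ν : PM Ω) : ℝ := ⨅ (γ : {γ // IsCoupling Ω μ ν γ}), cutPair Ω γ.1 id

/-- `S_{[0,1)}`: Lebesgue-measure-preserving measurable self-maps of `[0,1)`. -/
def IsMPS (s : ℝ → ℝ) : Prop :=
  MeasurePreserving s lam01 lam01 ∧ MapsTo s (Ico (0:ℝ) 1) (Ico (0:ℝ) 1)

/-- The weak cut metric `cut□`. -/
def cutd (μ ν : PM Ω) : ℝ :=
  ⨅ (γ : {γ // IsCoupling Ω μ ν γ}) (s : {s // IsMPS s}), cutPair Ω γ.1 s.1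


/-- A (decorated, bipartite) graphon: a measurable map `[0,1)² → P(Ω)`, coded as a function
`ℝ → ℝ → Ω → ℝ` that is measurable and takes values in the simplex on `[0,1)²`. -/
def IsGraphon (g : ℝ → ℝ → Ω → ℝ) : Prop :=
  Measurable (Function.uncurry g) ∧
    ∀ x ∈ Ico (0:ℝ) 1, ∀ y ∈ Ico (0:ℝ) 1, g x y ∈ simplex Ω

/-- The cut distance `δ_□` on graphons. -/
def deltaBox (f g : ℝ → ℝ → Ω → ℝ) : ℝ :=
  ⨅ (s : {s // IsMPS s}) (t : {t // IsMPS t}),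
    ⨆ (U : Set ℝ) (_ : MeasurableSet U) (V : Set ℝ) (_ : MeasurableSet V),
      tv Ω (fun ω => ∫ x in U, (∫ y in V, (f x y ω - g (s.1 x) (t.1 y) ω) ∂lam01) ∂lam01)

/-- `φ : [0,1) → Σ_Ω` is a representative of `μ ∈ P(Σ_Ω)` if it is measurable and pushes the
Lebesgue measure on `[0,1)` forward to `μ`. -/
def IsRep (μ : PM Ω) (φ : ℝ → SigmaSp Ω) : Prop :=
  Measurable φ ∧ lam01.map φ = (μ : Measure (SigmaSp Ω))

/-- The graphon `w_μ(x,y) = (φ(x))(y)` associated with a representative `φ` of `μ`. -/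
def graphonOf (φ : ℝ → SigmaSp Ω) : ℝ → ℝ → Ω → ℝ := fun x y => ev Ω (φ x) y


/-! ### Transport of atomless measures -/

theorem continuous_cdf_of_noAtoms (α : Measure ℝ) [IsProbabilityMeasure α] [NullSingletonClass α] :
    Continuous (ProbabilityTheory.cdf α) := by
  rw [continuous_iff_continuousAt]
  intro x
  have h := (ProbabilityTheory.cdf α).measure_singleton x
  rw [ProbabilityTheory.measure_cdf, measure_singleton] at h
  have h1 := (ProbabilityTheory.cdf α).mono.leftLim_le (le_refl x)
  rw [(ProbabilityTheory.cdf α).mono.continuousAt_iff_leftLim_eq_rightLim,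
    StieltjesFunction.rightLim_eq]
  have := ENNReal.ofReal_eq_zero.1 h.symm
  linarith

/-- The cumulative distribution function as a map to the unit interval. -/
def cdfI (α : Measure ℝ) (x : ℝ) : unitInterval :=
  ⟨ProbabilityTheory.cdf α x, ProbabilityTheory.cdf_nonneg α x, ProbabilityTheory.cdf_le_one α x⟩

theorem map_cdfI (α : Measure ℝ) [IsProbabilityMeasure α] [NullSingletonClass α] :
    Measurable (cdfI α) ∧ α.map (cdfI α) = volume := by
  have hc := continuous_cdf_of_noAtoms α
  have hm : Measurable (cdfI α) := (hc.subtype_mk _).measurable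
  refine ⟨hm, ?_⟩
  have ivt : ∀ t : ℝ, 0 < t → t < 1 → ∃ b, ProbabilityTheory.cdf α b = t := by
    intro t h0 h1
    obtain ⟨a, ha⟩ := ((ProbabilityTheory.tendsto_cdf_atBot α).eventually_lt_const h0).exists
    obtain ⟨c, hc1⟩ := ((ProbabilityTheory.tendsto_cdf_atTop α).eventually_const_lt h1).exists
    exact mem_range_of_exists_le_of_exists_ge hc ⟨a, ha.le⟩ ⟨c, hc1.le⟩
  have : IsProbabilityMeasure (α.map (cdfI α)) := Measure.isProbabilityMeasure_map hm.aemeasurable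
  refine Measure.ext_of_Iic _ _ fun t => ?_
  rw [Measure.map_apply hm measurableSet_Iic, unitInterval.volume_Iic]
  have hS : cdfI α ⁻¹' Iic t = {x | ProbabilityTheory.cdf α x ≤ t} := by
    ext x; simp [cdfI, ← Subtype.coe_le_coe]
  rw [hS]
  rcases eq_or_lt_of_le t.2.2 with h1 | h1
  · have : {x | ProbabilityTheory.cdf α x ≤ t} = univ := by
      ext x; simp [h1, ProbabilityTheory.cdf_le_one]
    rw [this]; simp [h1]
  apply le_antisymm
  · refine le_of_forall_gt_imp_ge_of_dense fun c hc' => ?_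
    rcases le_or_gt 1 c with hc1 | hc1
    · exact prob_le_one.trans hc1
    have hcfin : c ≠ ⊤ := (hc1.trans ENNReal.one_lt_top).ne
    have e1 : (t : ℝ) < c.toReal := by
      rwa [ENNReal.ofReal_lt_iff_lt_toReal t.2.1 hcfin] at hc'
    have e2 : c.toReal < 1 := by
      simpa using (ENNReal.toReal_lt_toReal hcfin (by simp)).2 hc1
    obtain ⟨b, hb⟩ := ivt c.toReal (t.2.1.trans_lt e1) e2
    calc α {x | ProbabilityTheory.cdf α x ≤ t} ≤ α (Iic b) := by
          apply measure_mono
          intro x hx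
          by_contra hbx
          have := (ProbabilityTheory.cdf α).mono (not_le.1 hbx).le
          simp only [mem_ofPred_eq] at hx
          linarith
      _ = c := by rw [← ProbabilityTheory.ofReal_cdf, hb, ENNReal.ofReal_toReal hcfin]
  · rcases eq_or_lt_of_le t.2.1 with h0 | h0
    · simp [← h0]
    obtain ⟨b, hb⟩ := ivt t h0 h1
    rw [← hb, ProbabilityTheory.ofReal_cdf]
    apply measure_mono
    intro x hx
    exact (ProbabilityTheory.cdf α).mono hx

theorem exists_map_eq_of_noAtoms {Y : Type*} [MeasurableSpace Y] [StandardBorelSpace Y]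
    (α : Measure ℝ) [IsProbabilityMeasure α] [NullSingletonClass α] (β : Measure Y) [IsProbabilityMeasure β] :
    ∃ s : ℝ → Y, Measurable s ∧ α.map s = β := by
  have : Nonempty Y := by
    by_contra h
    rw [not_nonempty_iff] at h
    have := measure_univ (μ := β)
    simp [Set.univ_eq_empty_iff.2 h] at this
  obtain ⟨f, hf, hfm⟩ := β.exists_measurable_map_eq
  obtain ⟨h1, h2⟩ := map_cdfI α
  refine ⟨f ∘ cdfI α, hf.comp h1, ?_⟩
  rw [← Measure.map_map hf h1, h2, hfm]

theorem exists_map_eq_of_mass_eq (α β : Measure ℝ) [IsFiniteMeasure α] [IsFiniteMeasure β]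
    [NullSingletonClass α] (h : α univ = β univ) : ∃ s : ℝ → ℝ, Measurable s ∧ α.map s = β := by
  by_cases h0 : α univ = 0
  · have ha : α = 0 := Measure.measure_univ_eq_zero.1 h0
    have hb : β = 0 := Measure.measure_univ_eq_zero.1 (h ▸ h0)
    exact ⟨id, measurable_id, by simp [ha, hb]⟩
  have hne : α univ ≠ ⊤ := measure_ne_top _ _
  have pa : IsProbabilityMeasure ((α univ)⁻¹ • α) :=
    ⟨by simp [ENNReal.inv_mul_cancel h0 hne]⟩
  have pb : IsProbabilityMeasure ((α univ)⁻¹ • β) :=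
    ⟨by simp [← h, ENNReal.inv_mul_cancel h0 hne]⟩
  have na : NullSingletonClass ((α univ)⁻¹ • α) := ⟨fun x => by simp⟩
  obtain ⟨s, hs, hm⟩ := exists_map_eq_of_noAtoms ((α univ)⁻¹ • α) ((α univ)⁻¹ • β)
  refine ⟨s, hs, ?_⟩
  rw [Measure.map_smul] at hm
  have := congrArg (fun m => (α univ) • m) hm
  simpa [smul_smul, ENNReal.mul_inv_cancel h0 hne] using this

instance : NullSingletonClass lam01 := by unfold lam01; infer_instance

theorem lam01_compl : lam01 (Ico (0:ℝ) 1)ᶜ = 0 := by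
  rw [lam01, Measure.restrict_apply (by measurability)]; simp

theorem ae_lam01_mem : ∀ᵐ x ∂lam01, x ∈ Ico (0:ℝ) 1 := by
  rw [ae_iff]; exact lam01_compl

theorem exists_isMPS_label (k k' : ℝ → ℕ) (hk : Measurable k) (hk' : Measurable k')
    (h : lam01.map k = lam01.map k') : ∃ s, IsMPS s ∧ ∀ᵐ x ∂lam01, k' (s x) = k x := by
  have hA : ∀ n, lam01 (k ⁻¹' {n}) = lam01 (k' ⁻¹' {n}) := fun n => by
    rw [← Measure.map_apply hk (measurableSet_singleton n), h,
      Measure.map_apply hk' (measurableSet_singleton n)]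
  have hmA : ∀ n, MeasurableSet (k ⁻¹' {n}) := fun n => hk (measurableSet_singleton n)
  have hmA' : ∀ n, MeasurableSet (k' ⁻¹' {n}) := fun n => hk' (measurableSet_singleton n)
  have key := fun n => exists_map_eq_of_mass_eq (lam01.restrict (k ⁻¹' {n}))
    (lam01.restrict (k' ⁻¹' {n})) (by simp [hA])
  choose s hs hsm using key
  have hS0 : Measurable (fun x => s (k x) x) := by
    have : Measurable (fun p : ℕ × ℝ => s p.1 p.2) := measurable_from_prod_countable_right hs
    exact this.comp (hk.prodMk measurable_id)
  let S : ℝ → ℝ := fun x => if s (k x) x ∈ Ico (0:ℝ) 1 then s (k x) x else 0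
  have hSm : Measurable S := Measurable.ite (hS0 measurableSet_Ico) hS0 measurable_const
  have hsplit : ∀ (j : ℝ → ℕ) (_ : Measurable j) (M : Set ℝ), MeasurableSet M →
      lam01 M = ∑' n, lam01 (M ∩ j ⁻¹' {n}) := by
    intro j hj M hM
    rw [← measure_iUnion]
    · congr 1; ext x; simp
    · intro a b hab
      refine Set.disjoint_left.2 fun x hx hx' => hab ?_
      exact hx.2.symm.trans hx'.2
    · exact fun n => hM.inter (hj (measurableSet_singleton n))
  have hmap0 : lam01.map (fun x => s (k x) x) = lam01 := by
    ext M hM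
    rw [Measure.map_apply hS0 hM, hsplit k hk _ (hS0 hM), hsplit k' hk' M hM]
    congr 1; ext n
    have := congrArg (fun m => m M) (hsm n)
    simp only [Measure.map_apply (hs n) hM, Measure.restrict_apply hM,
      Measure.restrict_apply (hs n hM)] at this
    rw [← this]
    congr 1; ext x
    simp only [mem_inter_iff, mem_preimage, mem_singleton_iff]
    constructor
    · rintro ⟨h1, rfl⟩; exact ⟨h1, rfl⟩
    · rintro ⟨h1, rfl⟩; exact ⟨h1, rfl⟩
  have hae : (fun x => s (k x) x) =ᵐ[lam01] S := by
    have : ∀ᵐ x ∂lam01, s (k x) x ∈ Ico (0:ℝ) 1 := by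
      refine ae_of_ae_map (p := fun y => y ∈ Ico (0:ℝ) 1) hS0.aemeasurable ?_
      rw [hmap0]; exact ae_lam01_mem
    filter_upwards [this] with x hx
    simp only [S]; rw [if_pos hx]
  refine ⟨S, ⟨⟨hSm, ?_⟩, ?_⟩, ?_⟩
  · rw [← Measure.map_congr hae, hmap0]
  · intro x _
    simp only [S]; split_ifs with h1
    · exact h1
    · simp
  · have h1 : ∀ n, ∀ᵐ x ∂(lam01.restrict (k ⁻¹' {n})), k' (s n x) = n := by
      intro n
      refine ae_of_ae_map (p := fun y => k' y = n) (hs n).aemeasurable ?_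
      rw [hsm n]
      exact ae_restrict_mem (hmA' n)
    have h2 : ∀ᵐ x ∂lam01, ∀ n, x ∈ k ⁻¹' {n} → k' (s n x) = n :=
      ae_all_iff.2 fun n => (ae_restrict_iff' (hmA n)).1 (h1 n)
    filter_upwards [h2, hae] with x hx hx'
    rw [← hx']
    exact hx (k x) rfl

theorem exists_isMPS_close {X : Type*} [PseudoMetricSpace X] [SecondCountableTopology X]
    [MeasurableSpace X] [BorelSpace X] (φ φ' : ℝ → X) (hφ : Measurable φ) (hφ' : Measurable φ')
    (h : lam01.map φ = lam01.map φ') {ε : ℝ} (hε : 0 < ε) :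
    ∃ s, IsMPS s ∧ ∀ᵐ x ∂lam01, dist (φ x) (φ' (s x)) < ε := by
  have : Nonempty X := ⟨φ 0⟩
  let d := TopologicalSpace.denseSeq X
  have hd : ∀ x, ∃ n, dist x (d n) < ε / 2 := by
    intro x
    obtain ⟨n, hy⟩ := (TopologicalSpace.denseRange_denseSeq X).exists_dist_lt x
      (half_pos hε)
    exact ⟨n, hy⟩
  classical
  let c : X → ℕ := fun x => Nat.find (hd x)
  have hc : Measurable c := measurable_find _ fun n => measurableSet_lt (by fun_prop) (by fun_prop)
  obtain ⟨s, hs, hs'⟩ := exists_isMPS_label (c ∘ φ) (c ∘ φ') (hc.comp hφ) (hc.comp hφ')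
    (by rw [← Measure.map_map hc hφ, ← Measure.map_map hc hφ', h])
  refine ⟨s, hs, hs'.mono fun x hx => ?_⟩
  have h1 : dist (φ x) (d (c (φ x))) < ε / 2 := Nat.find_spec (hd (φ x))
  have h2 : dist (φ' (s x)) (d (c (φ' (s x)))) < ε / 2 := Nat.find_spec (hd (φ' (s x)))
  simp only [Function.comp] at hx
  rw [hx] at h2
  calc _ ≤ _ := dist_triangle_right _ _ (d (c (φ x)))
    _ < ε := by linarith


section Aux

/-! ### The space `Σ_Ω` -/

theorem isClosed_simplex : IsClosed (simplex Ω) := by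
  have : simplex Ω = (⋂ ω, {p : Ω → ℝ | 0 ≤ p ω}) ∩ {p : Ω → ℝ | ∑ ω, p ω = 1} := by
    ext p; simp [simplex]
  rw [this]
  refine (isClosed_iInter fun ω => isClosed_le continuous_const (continuous_apply ω)).inter ?_
  exact isClosed_eq (by fun_prop) continuous_const

theorem isClosed_sigma :
    IsClosed {f : MeasureTheory.Lp (Ω → ℝ) 1 lam01 | ∀ᵐ x ∂lam01, f x ∈ simplex Ω} := by
  rw [← isSeqClosed_iff_isClosed]
  intro u f hu hf
  have h1 : TendstoInMeasure lam01 (fun n => u n) atTop f :=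
    tendstoInMeasure_of_tendsto_Lp hf
  obtain ⟨ns, -, hns⟩ := h1.exists_seq_tendsto_ae
  have h2 : ∀ᵐ x ∂lam01, ∀ n, u n x ∈ simplex Ω := ae_all_iff.2 hu
  show ∀ᵐ x ∂lam01, f x ∈ simplex Ω
  filter_upwards [hns, h2] with x hx hx2
  exact (isClosed_simplex Ω).mem_of_tendsto hx (Eventually.of_forall fun n => hx2 _)

instance : Fact ((1 : ENNReal) ≠ ⊤) := ⟨by simp⟩

instance polishSigma : PolishSpace (SigmaSp Ω) :=
  have : SecondCountableTopology (MeasureTheory.Lp (Ω → ℝ) 1 lam01) := inferInstance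
  have : PolishSpace (MeasureTheory.Lp (Ω → ℝ) 1 lam01) := inferInstance
  (isClosed_sigma Ω).polishSpace

/-- The `L¹` metric on `Σ_Ω`. -/
@[reducible] def sigMetric : PseudoMetricSpace (SigmaSp Ω) :=
  (inferInstance : PseudoMetricSpace
    {f : MeasureTheory.Lp (Ω → ℝ) 1 lam01 // ∀ᵐ x ∂lam01, f x ∈ simplex Ω})

theorem sigMetric_top : (sigMetric Ω).toUniformSpace.toTopologicalSpace =
    (inferInstance : TopologicalSpace (SigmaSp Ω)) := rfl

instance sigMetric' : PseudoMetricSpace (SigmaSp Ω) := (sigMetric Ω).replaceTopology rfl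

theorem dist_sig (σ τ : SigmaSp Ω) : dist σ τ = ∫ x, ‖σ.1 x - τ.1 x‖ ∂lam01 := by
  have : dist σ τ = dist σ.1 τ.1 := rfl
  rw [this, dist_eq_norm, L1.norm_eq_integral_norm]
  refine integral_congr_ae ?_
  filter_upwards [Lp.coeFn_sub σ.1 τ.1] with x hx
  rw [hx]; rfl


variable {Ω}

theorem ev_integrable (σ : SigmaSp Ω) {s : ℝ → ℝ} (hs : IsMPS s) (ω : Ω) :
    Integrable (fun x => ev Ω σ (s x) ω) lam01 := by
  have h1 : Integrable (fun x => σ.1 x) lam01 := L1.integrable_coeFn σ.1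
  exact (hs.1.integrable_comp_of_integrable (h1.eval ω))

theorem isMPS_id : IsMPS id := ⟨MeasurePreserving.id _, mapsTo_id _⟩

theorem IsMPS.comp {s t : ℝ → ℝ} (hs : IsMPS s) (ht : IsMPS t) : IsMPS (s ∘ t) :=
  ⟨hs.1.comp ht.1, hs.2.comp ht.2⟩

theorem ev_bound (σ : SigmaSp Ω) {s : ℝ → ℝ} (hs : IsMPS s) (ω : Ω) :
    ∀ᵐ x ∂lam01, |ev Ω σ (s x) ω| ≤ 1 := by
  refine hs.1.quasiMeasurePreserving.ae (p := fun x => |ev Ω σ x ω| ≤ 1) ?_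
  filter_upwards [σ.2] with x hx
  obtain ⟨h0, h1⟩ := hx
  show |σ.1 x ω| ≤ 1
  rw [abs_of_nonneg (h0 ω), ← h1]
  exact Finset.single_le_sum (f := fun ω => σ.1 x ω) (fun i _ => h0 i) (Finset.mem_univ ω)

/-- Integral of one coordinate of an element of `Σ_Ω` over `U` after rearrangement. -/
def J (U : Set ℝ) (s : ℝ → ℝ) (ω : Ω) (σ : SigmaSp Ω) : ℝ :=
  ∫ x in U, ev Ω σ (s x) ω ∂lam01

theorem J_bound (U : Set ℝ) {s : ℝ → ℝ} (hs : IsMPS s) (ω : Ω) (σ : SigmaSp Ω) :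
    |J U s ω σ| ≤ 1 := by
  have h := norm_setIntegral_le_of_norm_le_const_ae' (μ := lam01) (s := U) (C := 1)
    (f := fun x => ev Ω σ (s x) ω) (measure_lt_top _ _)
    ((ev_bound σ hs ω).mono fun x hx _ => hx)
  rw [Real.norm_eq_abs] at h
  refine h.trans ?_
  rw [one_mul]
  exact measureReal_le_one

theorem J_lip (U : Set ℝ) {s : ℝ → ℝ} (hs : IsMPS s) (ω : Ω) (σ τ : SigmaSp Ω) :
    |J U s ω σ - J U s ω τ| ≤ dist σ τ := by
  have hi := (L1.integrable_coeFn σ.1).sub (L1.integrable_coeFn τ.1)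
  have hi2 := hs.1.integrable_comp_of_integrable hi.norm
  rw [J, J, ← integral_sub (ev_integrable σ hs ω).integrableOn (ev_integrable τ hs ω).integrableOn,
    dist_sig, ← Real.norm_eq_abs]
  calc _ ≤ ∫ x in U, ‖ev Ω σ (s x) ω - ev Ω τ (s x) ω‖ ∂lam01 := norm_integral_le_integral_norm _
    _ ≤ ∫ x, ‖ev Ω σ (s x) ω - ev Ω τ (s x) ω‖ ∂lam01 :=
        setIntegral_le_integral ((ev_integrable σ hs ω).sub (ev_integrable τ hs ω)).norm
          (Eventually.of_forall fun x => norm_nonneg _)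
    _ ≤ ∫ x, ‖σ.1 (s x) - τ.1 (s x)‖ ∂lam01 := by
        refine integral_mono ((ev_integrable σ hs ω).sub (ev_integrable τ hs ω)).norm hi2 ?_
        intro x
        exact norm_le_pi_norm (σ.1 (s x) - τ.1 (s x)) ω
    _ = ∫ x, ‖σ.1 x - τ.1 x‖ ∂lam01 := by
        have := integral_map (μ := lam01) hs.1.measurable.aemeasurable
          (f := fun x => ‖σ.1 x - τ.1 x‖) (by rw [hs.1.map_eq]; exact hi.norm.aestronglyMeasurable)
        rw [hs.1.map_eq] at this
        exact this.symm

theorem J_measurable (U : Set ℝ) {s : ℝ → ℝ} (hs : IsMPS s) (ω : Ω) :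
    Measurable (J (Ω := Ω) U s ω) := by
  have : LipschitzWith 1 (J (Ω := Ω) U s ω) := LipschitzWith.of_dist_le_mul fun σ τ => by
    rw [Real.dist_eq]; simpa using J_lip U hs ω σ τ
  exact this.continuous.measurable

/-- The inner integral in `cutPair` and in `deltaBox`. -/
def H (U : Set ℝ) (s : ℝ → ℝ) (ω : Ω) (p : SigmaSp Ω × SigmaSp Ω) : ℝ :=
  ∫ x in U, (ev Ω p.1 x ω - ev Ω p.2 (s x) ω) ∂lam01

theorem H_eq (U : Set ℝ) {s : ℝ → ℝ} (hs : IsMPS s) (ω : Ω) (p : SigmaSp Ω × SigmaSp Ω) :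
    H U s ω p = J U id ω p.1 - J U s ω p.2 :=
  integral_sub (ev_integrable p.1 isMPS_id ω).integrableOn (ev_integrable p.2 hs ω).integrableOn

theorem H_measurable (U : Set ℝ) {s : ℝ → ℝ} (hs : IsMPS s) (ω : Ω) :
    Measurable (H (Ω := Ω) U s ω) := by
  have : H (Ω := Ω) U s ω = fun p => J U id ω p.1 - J U s ω p.2 := funext (H_eq U hs ω)
  rw [this]
  exact ((J_measurable U isMPS_id ω).comp measurable_fst).sub
    ((J_measurable U hs ω).comp measurable_snd)

theorem H_bound (U : Set ℝ) {s : ℝ → ℝ} (hs : IsMPS s) (ω : Ω) (p : SigmaSp Ω × SigmaSp Ω) :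
    |H U s ω p| ≤ 2 := by
  rw [H_eq U hs]
  have h1 := J_bound U isMPS_id ω p.1
  have h2 := J_bound U hs ω p.2
  rw [abs_le] at *
  constructor <;> linarith [h1.1, h1.2, h2.1, h2.2]

theorem H_lip (U : Set ℝ) {s : ℝ → ℝ} (hs : IsMPS s) (ω : Ω) (p q : SigmaSp Ω × SigmaSp Ω) :
    |H U s ω p - H U s ω q| ≤ dist p.1 q.1 + dist p.2 q.2 := by
  rw [H_eq U hs, H_eq U hs]
  have h1 := abs_le.1 (J_lip U isMPS_id ω p.1 q.1)
  have h2 := abs_le.1 (J_lip U hs ω p.2 q.2)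
  rw [abs_le]
  constructor <;> linarith [h1.1, h1.2, h2.1, h2.2]

theorem H_integrable {X : Type*} [MeasurableSpace X] (m : Measure X) [IsFiniteMeasure m]
    (Φ : X → SigmaSp Ω × SigmaSp Ω) (hΦ : Measurable Φ)
    (U : Set ℝ) {s : ℝ → ℝ} (hs : IsMPS s) (ω : Ω) :
    Integrable (fun x => H U s ω (Φ x)) m :=
  Integrable.of_bound ((H_measurable U hs ω).comp hΦ).aestronglyMeasurable 2
    (Eventually.of_forall fun _ => H_bound U hs ω _)

/-! ### Total variation and nested suprema -/

theorem tv_nonneg (v : Ω → ℝ) : 0 ≤ tv Ω v := by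
  unfold tv; positivity

theorem tv_le_of_abs_le {v : Ω → ℝ} {c : ℝ} (h : ∀ ω, |v ω| ≤ c) :
    tv Ω v ≤ Fintype.card Ω * c := by
  unfold tv
  have h1 : ∑ ω, |v ω| ≤ Fintype.card Ω * c := by
    calc _ ≤ ∑ _ω : Ω, c := Finset.sum_le_sum fun ω _ => h ω
      _ = _ := by simp
  have h2 : 0 ≤ ∑ ω, |v ω| := by positivity
  linarith

theorem tv_sub_le (v w : Ω → ℝ) {c : ℝ} (h : ∀ ω, |v ω - w ω| ≤ c) :
    tv Ω v ≤ tv Ω w + Fintype.card Ω * c := by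
  have h1 := tv_le_of_abs_le (v := fun ω => v ω - w ω) h
  have : tv Ω v ≤ tv Ω w + tv Ω (fun ω => v ω - w ω) := by
    unfold tv
    rw [← add_div, ← Finset.sum_add_distrib]
    gcongr with ω
    have := abs_add_le (w ω) (v ω - w ω)
    simpa using this
  linarith

theorem sup4_le {X Y : Type*} [MeasurableSpace X] [MeasurableSpace Y] (F : Set X → Set Y → ℝ)
    {c : ℝ} (hc : 0 ≤ c) (h : ∀ B U, MeasurableSet B → MeasurableSet U → F B U ≤ c) :
    (⨆ (B : Set X) (_ : MeasurableSet B) (U : Set Y) (_ : MeasurableSet U), F B U) ≤ c :=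
  Real.iSup_le (fun B => Real.iSup_le (fun hB => Real.iSup_le (fun U =>
    Real.iSup_le (fun hU => h B U hB hU) hc) hc) hc) hc

theorem le_sup4 {X Y : Type*} [MeasurableSpace X] [MeasurableSpace Y] (F : Set X → Set Y → ℝ)
    {c : ℝ} (hc : 0 ≤ c) (h : ∀ B U, MeasurableSet B → MeasurableSet U → F B U ≤ c)
    {B : Set X} {U : Set Y} (hB : MeasurableSet B) (hU : MeasurableSet U) :
    F B U ≤ ⨆ (B : Set X) (_ : MeasurableSet B) (U : Set Y) (_ : MeasurableSet U), F B U := by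
  refine le_ciSup_of_le ⟨c, ?_⟩ B (le_ciSup_of_le ⟨c, ?_⟩ hB (le_ciSup_of_le ⟨c, ?_⟩ U
    (le_ciSup_of_le ⟨c, ?_⟩ hU le_rfl)))
  · rintro _ ⟨B, rfl⟩
    exact Real.iSup_le (fun hB => Real.iSup_le (fun U =>
      Real.iSup_le (fun hU => h B U hB hU) hc) hc) hc
  · rintro _ ⟨hB, rfl⟩
    exact Real.iSup_le (fun U => Real.iSup_le (fun hU => h B U hB hU) hc) hc
  · rintro _ ⟨U, rfl⟩
    exact Real.iSup_le (fun hU => h B U hB hU) hc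
  · rintro _ ⟨hU, rfl⟩
    exact h B U hB hU

theorem sup4_nonneg {X Y : Type*} [MeasurableSpace X] [MeasurableSpace Y] (F : Set X → Set Y → ℝ)
    (h : ∀ B U, 0 ≤ F B U) :
    0 ≤ ⨆ (B : Set X) (_ : MeasurableSet B) (U : Set Y) (_ : MeasurableSet U), F B U :=
  Real.iSup_nonneg fun B => Real.iSup_nonneg fun _ => Real.iSup_nonneg fun U =>
    Real.iSup_nonneg fun _ => h B U

/-- Passing from arbitrary subsets of the domain to preimages. -/
theorem exists_tv_le {X : Type*} [MeasurableSpace X] (γ : Measure X)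
    (Ψ : ℝ → X) (hΨ : Measurable Ψ) (hm : lam01.map Ψ = γ) (h : Ω → X → ℝ)
    (hh : ∀ ω, Measurable (h ω)) (hi : ∀ ω, Integrable (h ω) γ) (U : Set ℝ)
    (hU : MeasurableSet U) :
    ∃ B, MeasurableSet B ∧
      tv Ω (fun ω => ∫ x in U, h ω (Ψ x) ∂lam01) ≤ tv Ω (fun ω => ∫ p in B, h ω p ∂γ) := by
  set v : Ω → ℝ := fun ω => ∫ x in U, h ω (Ψ x) ∂lam01 with hv
  let e : Ω → ℝ := fun ω => SignType.sign (v ω)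
  have he : ∀ ω, |v ω| = e ω * v ω := fun ω => (sign_mul_self (v ω)).symm
  have he1 : ∀ ω, |e ω| ≤ 1 := by
    intro ω
    rcases lt_trichotomy (v ω) 0 with h | h | h <;> simp [e, h]
  let g : X → ℝ := fun p => ∑ ω, e ω * h ω p
  have hg : Measurable g := Finset.measurable_fun_sum _ fun ω _ => (hh ω).const_mul _
  have hgi : Integrable g γ := integrable_finsetSum _ fun ω _ => (hi ω).const_mul _
  have hiΨ : ∀ ω, Integrable (fun x => h ω (Ψ x)) lam01 := fun ω => by
    have := hi ω
    rw [← hm] at this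
    exact this.comp_measurable hΨ
  have hgiΨ : Integrable (fun x => g (Ψ x)) lam01 := by
    rw [← hm] at hgi
    exact hgi.comp_measurable hΨ
  refine ⟨{p | 0 ≤ g p}, measurableSet_le measurable_const hg, ?_⟩
  have hB : MeasurableSet {p | 0 ≤ g p} := measurableSet_le measurable_const hg
  unfold tv
  refine div_le_div_of_nonneg_right ?_ (by norm_num)
  calc ∑ ω, |v ω| = ∑ ω, e ω * v ω := Finset.sum_congr rfl fun ω _ => he ω
    _ = ∫ x in U, g (Ψ x) ∂lam01 := by
        simp only [g, hv]
        rw [integral_finsetSum _ fun ω _ => ((hiΨ ω).const_mul _).integrableOn]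
        simp only [integral_const_mul]
    _ ≤ ∫ x in {x | 0 ≤ g (Ψ x)}, g (Ψ x) ∂lam01 :=
        setIntegral_le_nonneg hU (hg.comp hΨ).stronglyMeasurable hgiΨ
    _ = ∫ p in {p | 0 ≤ g p}, g p ∂γ := by
        rw [← hm, setIntegral_map hB (hg.aestronglyMeasurable) hΨ.aemeasurable]; rfl
    _ = ∑ ω, e ω * ∫ p in {p | 0 ≤ g p}, h ω p ∂γ := by
        have : ∀ p, g p = ∑ ω, e ω * h ω p := fun p => rfl
        simp only [this]
        rw [integral_finsetSum _ fun ω _ => ((hi ω).const_mul _).integrableOn]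
        simp only [integral_const_mul]
    _ ≤ ∑ ω, |∫ p in {p | 0 ≤ g p}, h ω p ∂γ| := by
        refine Finset.sum_le_sum fun ω _ => ?_
        refine (le_abs_self _).trans ?_
        rw [abs_mul]
        exact mul_le_of_le_one_left (abs_nonneg _) (he1 ω)


/-! ### Comparison of the two distances -/

theorem cutPair_eq (γ : Measure (SigmaSp Ω × SigmaSp Ω)) (s : ℝ → ℝ) : cutPair Ω γ s =
    ⨆ (B : Set (SigmaSp Ω × SigmaSp Ω)) (_ : MeasurableSet B) (U : Set ℝ) (_ : MeasurableSet U),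
      tv Ω (fun ω => ∫ p in B, H U s ω p ∂γ) := rfl

/-- The inner supremum of `deltaBox`. -/
def boxPair (f g : ℝ → ℝ → Ω → ℝ) (s t : ℝ → ℝ) : ℝ :=
  ⨆ (U : Set ℝ) (_ : MeasurableSet U) (V : Set ℝ) (_ : MeasurableSet V),
      tv Ω (fun ω => ∫ x in U, (∫ y in V, (f x y ω - g (s x) (t y) ω) ∂lam01) ∂lam01)

theorem boxPair_eq (φ ξ : ℝ → SigmaSp Ω) (s t : ℝ → ℝ) :
    boxPair (graphonOf Ω φ) (graphonOf Ω ξ) s t =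
    ⨆ (U : Set ℝ) (_ : MeasurableSet U) (V : Set ℝ) (_ : MeasurableSet V),
      tv Ω (fun ω => ∫ x in U, H V t ω (φ x, ξ (s x)) ∂lam01) := rfl

theorem boxPair_nonneg (f g : ℝ → ℝ → Ω → ℝ) (s t : ℝ → ℝ) : 0 ≤ boxPair f g s t :=
  sup4_nonneg _ fun _ _ => tv_nonneg _

theorem cutPair_nonneg (γ : Measure (SigmaSp Ω × SigmaSp Ω)) (s : ℝ → ℝ) : 0 ≤ cutPair Ω γ s :=
  sup4_nonneg _ fun _ _ => tv_nonneg _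

theorem deltaBox_nonneg (f g : ℝ → ℝ → Ω → ℝ) : 0 ≤ deltaBox Ω f g :=
  Real.iInf_nonneg fun _ => Real.iInf_nonneg fun _ => boxPair_nonneg _ _ _ _

theorem deltaBox_le (f g : ℝ → ℝ → Ω → ℝ) {s t : ℝ → ℝ} (hs : IsMPS s) (ht : IsMPS t) :
    deltaBox Ω f g ≤ boxPair f g s t :=
  ciInf_le_of_le ⟨0, by
      rintro _ ⟨s, rfl⟩; exact Real.iInf_nonneg fun _ => boxPair_nonneg _ _ _ _⟩ ⟨s, hs⟩
    (ciInf_le_of_le ⟨0, by rintro _ ⟨t, rfl⟩; exact boxPair_nonneg _ _ _ _⟩ ⟨t, ht⟩ le_rfl)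

theorem cutd_le (μ ν : PM Ω) {γ : Measure (SigmaSp Ω × SigmaSp Ω)} (hγ : IsCoupling Ω μ ν γ)
    {s : ℝ → ℝ} (hs : IsMPS s) : cutd Ω μ ν ≤ cutPair Ω γ s :=
  ciInf_le_of_le ⟨0, by
      rintro _ ⟨s, rfl⟩; exact Real.iInf_nonneg fun _ => cutPair_nonneg _ _⟩ ⟨γ, hγ⟩
    (ciInf_le_of_le ⟨0, by rintro _ ⟨t, rfl⟩; exact cutPair_nonneg _ _⟩ ⟨s, hs⟩ le_rfl)

theorem tv_integral_H_le {X : Type*} [MeasurableSpace X] (m : Measure X) [IsProbabilityMeasure m]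
    (Φ : X → SigmaSp Ω × SigmaSp Ω) (B : Set X) (U : Set ℝ) {s : ℝ → ℝ} (hs : IsMPS s) :
    tv Ω (fun ω => ∫ x in B, H U s ω (Φ x) ∂m) ≤ Fintype.card Ω * 2 := by
  refine tv_le_of_abs_le fun ω => ?_
  have h := norm_setIntegral_le_of_norm_le_const (μ := m) (s := B) (C := 2)
    (f := fun x => H U s ω (Φ x)) (measure_lt_top _ _) (fun x _ => H_bound U hs ω (Φ x))
  rw [Real.norm_eq_abs] at h
  refine h.trans ?_
  have : m.real B ≤ 1 := measureReal_le_one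
  linarith

theorem cutd_le_deltaBox (μ ν : PM Ω) (φ ξ : ℝ → SigmaSp Ω) (hφ : IsRep Ω μ φ)
    (hξ : IsRep Ω ν ξ) : cutd Ω μ ν ≤ deltaBox Ω (graphonOf Ω φ) (graphonOf Ω ξ) := by
  have : Nonempty {s // IsMPS s} := ⟨⟨id, isMPS_id⟩⟩
  refine le_ciInf fun s => le_ciInf fun t => ?_
  obtain ⟨s, hs⟩ := s
  obtain ⟨t, ht⟩ := t
  change _ ≤ boxPair (graphonOf Ω φ) (graphonOf Ω ξ) s t
  let Φ : ℝ → SigmaSp Ω × SigmaSp Ω := fun x => (φ x, ξ (s x))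
  have hξs : Measurable (fun x => ξ (s x)) := hξ.1.comp hs.1.measurable
  have hΦ : Measurable Φ := hφ.1.prodMk hξs
  have hγ : IsCoupling Ω μ ν (lam01.map Φ) := by
    constructor
    · rw [Measure.map_map measurable_fst hΦ]; exact hφ.2
    · rw [Measure.map_map measurable_snd hΦ]
      show lam01.map (ξ ∘ s) = _
      rw [← Measure.map_map hξ.1 hs.1.measurable, hs.1.map_eq, hξ.2]
  refine (cutd_le μ ν hγ ht).trans ?_
  rw [cutPair_eq]
  refine sup4_le _ (boxPair_nonneg _ _ _ _) fun B U hB hU => ?_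
  have e : ∀ ω, ∫ p in B, H U t ω p ∂(lam01.map Φ) = ∫ x in Φ ⁻¹' B, H U t ω (Φ x) ∂lam01 :=
    fun ω => setIntegral_map hB (H_measurable U ht ω).aestronglyMeasurable hΦ.aemeasurable
  simp only [e]
  rw [boxPair_eq]
  exact le_sup4 (fun (B U : Set ℝ) => tv Ω (fun ω => ∫ x in B, H U t ω (φ x, ξ (s x)) ∂lam01))
    (c := Fintype.card Ω * 2) (by positivity)
    (fun B U _ _ => tv_integral_H_le lam01 Φ B U ht) (hΦ hB) hU

theorem deltaBox_le_cutd (μ ν : PM Ω) (φ ξ : ℝ → SigmaSp Ω) (hφ : IsRep Ω μ φ)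
    (hξ : IsRep Ω ν ξ) : deltaBox Ω (graphonOf Ω φ) (graphonOf Ω ξ) ≤ cutd Ω μ ν := by
  have : Nonempty {s // IsMPS s} := ⟨⟨id, isMPS_id⟩⟩
  have : Nonempty {γ // IsCoupling Ω μ ν γ} :=
    ⟨⟨(μ : Measure (SigmaSp Ω)).prod ν, by constructor <;> simp⟩⟩
  refine le_ciInf fun γ => le_ciInf fun t => ?_
  obtain ⟨γ, hγ⟩ := γ
  obtain ⟨t, ht⟩ := t
  change _ ≤ cutPair Ω γ t
  have hγp : IsProbabilityMeasure γ := by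
    constructor
    have := congrArg (fun m => m univ) hγ.1
    simpa [Measure.map_apply measurable_fst MeasurableSet.univ] using this
  obtain ⟨Φ, hΦ, hΦm⟩ := exists_map_eq_of_noAtoms lam01 γ
  refine le_of_forall_pos_le_add fun η hη => ?_
  set N : ℝ := (Fintype.card Ω : ℝ) with hN
  have hN0 : 0 ≤ N := by positivity
  let ε : ℝ := η / (2 * (N + 1))
  have hε : 0 < ε := by positivity
  have hεη : N * (ε + ε) ≤ η := by
    have : ε * (2 * (N + 1)) = η := by simp only [ε]; field_simp
    nlinarith
  have m1 : Measurable (fun x => (Φ x).1) := measurable_fst.comp hΦ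
  have m2 : Measurable (fun x => (Φ x).2) := measurable_snd.comp hΦ
  have l1 : lam01.map (fun x => (Φ x).1) = lam01.map φ := by
    rw [hφ.2, ← hγ.1, ← hΦm, Measure.map_map measurable_fst hΦ]; rfl
  have l2 : lam01.map (fun x => (Φ x).2) = lam01.map ξ := by
    rw [hξ.2, ← hγ.2, ← hΦm, Measure.map_map measurable_snd hΦ]; rfl
  obtain ⟨s1, hs1, hd1⟩ := exists_isMPS_close φ _ hφ.1 m1 l1.symm hε
  obtain ⟨s2, hs2, hd2⟩ := exists_isMPS_close _ ξ m2 hξ.1 l2 hε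
  have hd2' : ∀ᵐ x ∂lam01, dist (Φ (s1 x)).2 (ξ (s2 (s1 x))) < ε :=
    hs1.1.quasiMeasurePreserving.ae hd2
  refine (deltaBox_le _ _ (hs2.comp hs1) ht).trans ?_
  rw [boxPair_eq]
  refine sup4_le _ (add_nonneg (cutPair_nonneg _ _) hη.le) fun U V hU hV => ?_
  have mΨ : Measurable (fun x => Φ (s1 x)) := hΦ.comp hs1.1.measurable
  have lΨ : lam01.map (fun x => Φ (s1 x)) = γ := by
    show lam01.map (Φ ∘ s1) = γ
    rw [← Measure.map_map hΦ hs1.1.measurable, hs1.1.map_eq, hΦm]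
  obtain ⟨B, hB, hle⟩ := exists_tv_le γ _ mΨ lΨ (fun ω => H V t ω)
    (fun ω => H_measurable V ht ω) (fun ω => H_integrable γ id measurable_id V ht ω) U hU
  have hcut : tv Ω (fun ω => ∫ p in B, H V t ω p ∂γ) ≤ cutPair Ω γ t := by
    rw [cutPair_eq]
    exact le_sup4 (fun (B : Set (SigmaSp Ω × SigmaSp Ω)) (U : Set ℝ) =>
      tv Ω (fun ω => ∫ p in B, H U t ω p ∂γ))
      (c := Fintype.card Ω * 2) (by positivity)
      (fun B U _ _ => tv_integral_H_le γ id B U ht) hB hV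
  have mξ : Measurable (fun x => (φ x, ξ ((s2 ∘ s1) x))) :=
    hφ.1.prodMk (hξ.1.comp (hs2.comp hs1).1.measurable)
  have herr := tv_sub_le (fun ω => ∫ x in U, H V t ω (φ x, ξ ((s2 ∘ s1) x)) ∂lam01)
    (fun ω => ∫ x in U, H V t ω (Φ (s1 x)) ∂lam01) (c := ε + ε) (fun ω => by
      rw [← integral_sub (H_integrable lam01 _ mξ V ht ω).integrableOn
        (H_integrable lam01 _ mΨ V ht ω).integrableOn, ← Real.norm_eq_abs]
      refine (norm_setIntegral_le_of_norm_le_const_ae' (C := ε + ε) (measure_lt_top _ _) ?_).trans ?_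
      · filter_upwards [hd1, hd2'] with x h1 h2 _
        refine (H_lip V ht ω _ _).trans ?_
        rw [dist_comm] at h2
        exact add_le_add h1.le h2.le
      · have : lam01.real U ≤ 1 := measureReal_le_one
        nlinarith)
  linarith

/-! ### Surjectivity -/

theorem measurable_of_dist {A X : Type*} [MeasurableSpace A] [PseudoMetricSpace X]
    [SecondCountableTopology X] [MeasurableSpace X] [BorelSpace X] (f : A → X)
    (h : ∀ c, Measurable (fun a => dist (f a) c)) : Measurable f := by
  refine measurable_of_isOpen fun O hO => ?_
  have : ∀ x : O, ∃ r > 0, Metric.ball (x : X) r ⊆ O := fun x => Metric.isOpen_iff.1 hO x x.2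
  choose r hr hrO using this
  obtain ⟨T, hT, hTe⟩ := TopologicalSpace.isOpen_iUnion_countable
    (fun x : O => Metric.ball (x : X) (r x)) fun x => Metric.isOpen_ball
  have hO' : O = ⋃ i ∈ T, Metric.ball (i : X) (r i) := by
    rw [hTe]
    apply Subset.antisymm
    · intro x hx
      exact mem_iUnion.2 ⟨⟨x, hx⟩, Metric.mem_ball_self (hr _)⟩
    · exact iUnion_subset hrO
  rw [hO', preimage_iUnion₂]
  refine MeasurableSet.biUnion hT fun i _ => ?_
  exact measurableSet_lt (h i) measurable_const

theorem exists_rep_of_graphon (g : ℝ → ℝ → Ω → ℝ) (hg : IsGraphon Ω g) :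
    ∃ (μ : PM Ω) (φ : ℝ → SigmaSp Ω), IsRep Ω μ φ ∧ deltaBox Ω (graphonOf Ω φ) g = 0 := by
  classical
  let I : Set ℝ := Ico 0 1
  have h00 : g 0 0 ∈ simplex Ω := hg.2 0 (by simp) 0 (by simp)
  let G : ℝ → ℝ → Ω → ℝ := fun x y => if (x, y) ∈ I ×ˢ I then g x y else g 0 0
  have hGm : Measurable (Function.uncurry G) :=
    Measurable.ite (measurableSet_Ico.prod measurableSet_Ico) hg.1 measurable_const
  have hGs : ∀ x y, G x y ∈ simplex Ω := by
    intro x y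
    simp only [G]
    split_ifs with h
    · exact hg.2 x h.1 y h.2
    · exact h00
  have hGx : ∀ x, Measurable (G x) := fun x => hGm.comp (measurable_const.prodMk measurable_id)
  have hGb : ∀ x y, ‖G x y‖ ≤ 1 := by
    intro x y
    obtain ⟨h0, h1⟩ := hGs x y
    refine (pi_norm_le_iff_of_nonneg zero_le_one).2 fun ω => ?_
    rw [Real.norm_eq_abs, abs_of_nonneg (h0 ω), ← h1]
    exact Finset.single_le_sum (f := fun ω => G x y ω) (fun i _ => h0 i) (Finset.mem_univ ω)
  have hGL : ∀ x, MemLp (G x) 1 lam01 := fun x =>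
    MemLp.of_bound (hGx x).aestronglyMeasurable 1 (Eventually.of_forall (hGb x))
  let φ : ℝ → SigmaSp Ω := fun x => ⟨(hGL x).toLp (G x), by
    filter_upwards [(hGL x).coeFn_toLp] with y hy
    rw [hy]; exact hGs x y⟩
  have hφae : ∀ x, ∀ᵐ y ∂lam01, ev Ω (φ x) y = G x y := fun x => (hGL x).coeFn_toLp
  have hφ : Measurable φ := by
    refine measurable_of_dist φ fun c => ?_
    have e : ∀ x, dist (φ x) c = ∫ y, ‖G x y - c.1 y‖ ∂lam01 := by
      intro x
      rw [dist_sig]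
      refine integral_congr_ae ?_
      filter_upwards [(hGL x).coeFn_toLp] with y hy
      rw [hy]
    simp only [e]
    have hc : Measurable (fun y => c.1 y) := (Lp.stronglyMeasurable c.1).measurable
    have : StronglyMeasurable (Function.uncurry fun x y => ‖G x y - c.1 y‖) :=
      (hGm.sub (hc.comp measurable_snd)).norm.stronglyMeasurable
    exact this.integral_prod_right.measurable
  refine ⟨⟨lam01.map φ, Measure.isProbabilityMeasure_map hφ.aemeasurable⟩, φ, ⟨hφ, rfl⟩, ?_⟩
  refine le_antisymm ?_ (deltaBox_nonneg _ _)
  refine (deltaBox_le _ _ isMPS_id isMPS_id).trans ?_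
  refine sup4_le _ le_rfl fun U V hU hV => ?_
  have hz : ∀ ω, ∫ x in U, (∫ y in V, (graphonOf Ω φ x y ω - g (id x) (id y) ω) ∂lam01) ∂lam01
      = 0 := by
    intro ω
    refine integral_eq_zero_of_ae (ae_restrict_of_ae ?_)
    filter_upwards [ae_lam01_mem] with x hx
    refine integral_eq_zero_of_ae (ae_restrict_of_ae ?_)
    filter_upwards [ae_lam01_mem, hφae x] with y hy hy'
    have : G x y = g x y := if_pos ⟨hx, hy⟩
    simp [graphonOf, hy', this]
  simp only [hz]
  simp [tv]

end Aux

variable {Ω}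

/-- Proposition: `𝓜_Ω ≅ 𝒲_Ω`. The map sending the `cut□`-class of
`μ ∈ P(Σ_Ω)` to the `δ_□`-class of the graphon `w_μ(x,y) = (φ(x))(y)` (for any measurable `φ`
with `μ = φ(λ)`) is a well-defined homeomorphism from `𝓜_Ω` to `𝒲_Ω`. Unfolded to the level of
representatives this says: representatives exist; the map is well defined and injective on
`cut□`-classes; it is surjective onto `δ_□`-classes of graphons; and it is continuous with
continuous inverse (in the pseudometrics `cut□`, `δ_□`). -/
theorem homeomorphism_measures_to_graphons (Ω : Type) [Fintype Ω] :
    -- every `μ` admits a representative `φ`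
    (∀ μ : PM Ω, ∃ φ : ℝ → SigmaSp Ω, IsRep Ω μ φ) ∧
    -- the induced map on classes is well defined and injective
    (∀ (μ ν : PM Ω) (φ ξ : ℝ → SigmaSp Ω), IsRep Ω μ φ → IsRep Ω ν ξ →
      (cutd Ω μ ν = 0 ↔ deltaBox Ω (graphonOf Ω φ) (graphonOf Ω ξ) = 0)) ∧
    -- it is surjective onto the classes of graphons
    (∀ g : ℝ → ℝ → Ω → ℝ, IsGraphon Ω g →
      ∃ (μ : PM Ω) (φ : ℝ → SigmaSp Ω), IsRep Ω μ φ ∧ deltaBox Ω (graphonOf Ω φ) g = 0) ∧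
    -- it is continuous
    (∀ (μ : PM Ω) (φ : ℝ → SigmaSp Ω), IsRep Ω μ φ → ∀ ε : ℝ, 0 < ε → ∃ δ : ℝ, 0 < δ ∧
      ∀ (ν : PM Ω) (ξ : ℝ → SigmaSp Ω), IsRep Ω ν ξ →
        cutd Ω μ ν < δ → deltaBox Ω (graphonOf Ω φ) (graphonOf Ω ξ) < ε) ∧
    -- and its inverse is continuous
    (∀ (μ : PM Ω) (φ : ℝ → SigmaSp Ω), IsRep Ω μ φ → ∀ ε : ℝ, 0 < ε → ∃ δ : ℝ, 0 < δ ∧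
      ∀ (ν : PM Ω) (ξ : ℝ → SigmaSp Ω), IsRep Ω ν ξ →
        deltaBox Ω (graphonOf Ω φ) (graphonOf Ω ξ) < δ → cutd Ω μ ν < ε) := by
  have heq : ∀ (μ ν : PM Ω) (φ ξ : ℝ → SigmaSp Ω), IsRep Ω μ φ → IsRep Ω ν ξ →
      cutd Ω μ ν = deltaBox Ω (graphonOf Ω φ) (graphonOf Ω ξ) := fun μ ν φ ξ hφ hξ =>
    le_antisymm (cutd_le_deltaBox μ ν φ ξ hφ hξ) (deltaBox_le_cutd μ ν φ ξ hφ hξ)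
  refine ⟨fun μ => exists_map_eq_of_noAtoms lam01 (μ : Measure (SigmaSp Ω)), ?_,
    exists_rep_of_graphon, ?_, ?_⟩
  · intro μ ν φ ξ hφ hξ
    rw [heq μ ν φ ξ hφ hξ]
  · intro μ φ hφ ε hε
    exact ⟨ε, hε, fun ν ξ hξ h => by rwa [← heq μ ν φ ξ hφ hξ]⟩
  · intro μ φ hφ ε hε
    exact ⟨ε, hε, fun ν ξ hξ h => by rwa [heq μ ν φ ξ hφ hξ]⟩

end Paper
end
end

section
/- For any ε > 0 there exists N = N(ε) > 0 such that for any probability measure μ on Σ_Ω there exist σ_1,…,σ_N ∈ Σ_Ω and a probability vector w = (w_1,…,w_N) such that Cut□(μ, Σ_{i=1}^N w_i δ_{σ_i}) < ε. -/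
open MeasureTheory Set Filter Topology

noncomputable section

namespace Paper

variable (Ω : Type) [Fintype Ω]

open scoped Classical

/-- `σ[ω|U] = ∫_U σ_x(ω) dx`. -/
def avgOn (f : SigmaSp Ω) (U : Set ℝ) (ω : Ω) : ℝ := ∫ x in U, ev Ω f x ω ∂lam01

/-- `⟨Σ[·|U]⟩_{μ[·|T]} = (1/μ(T)) ∫_T σ[·|U] dμ(σ)`. -/
def condAvg (μ : PM Ω) (T : Set (SigmaSp Ω)) (U : Set ℝ) (ω : Ω) : ℝ :=
  (∫ f in T, avgOn Ω f U ω ∂(μ : Measure (SigmaSp Ω))) /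
    (((μ : Measure (SigmaSp Ω)) T).toReal)

/-- A finite measurable partition of `[0,1)`. -/
def IsPartitionI {K : ℕ} (V : Fin K → Set ℝ) : Prop :=
  (∀ i, MeasurableSet (V i)) ∧ Pairwise (Function.onFun Disjoint V) ∧
    (⋃ i, V i) = Ico (0:ℝ) 1

/-- A finite measurable partition of `Σ_Ω`. -/
def IsPartitionS {L : ℕ} (S : Fin L → Set (SigmaSp Ω)) : Prop :=
  (∀ j, MeasurableSet (S j)) ∧ Pairwise (Function.onFun Disjoint S) ∧
    (⋃ j, S j) = univ

/-- `μ` is `ε`-regular with respect to the pair of partitions `(V, S)`: conditions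
**REG1**–**REG4** of the paper. -/
def IsRegular (ε : ℝ) (μ : PM Ω) {K L : ℕ}
    (V : Fin K → Set ℝ) (S : Fin L → Set (SigmaSp Ω)) : Prop :=
  ∃ R : Set (Fin K × Fin L),
    -- REG1
    (∀ p ∈ R, 0 < lam01 (V p.1) ∧ 0 < (μ : Measure (SigmaSp Ω)) (S p.2)) ∧
    -- REG2
    (1 - ε < ∑ p : Fin K × Fin L,
        if p ∈ R then (lam01 (V p.1)).toReal * ((μ : Measure (SigmaSp Ω)) (S p.2)).toReal
        else 0) ∧
    -- REG3
    (∀ p ∈ R, ∀ f ∈ S p.2, ∀ g ∈ S p.2,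
      tv Ω (fun ω => avgOn Ω f (V p.1) ω - avgOn Ω g (V p.1) ω) < ε) ∧
    -- REG4
    (∀ p ∈ R, ∀ U : Set ℝ, U ⊆ V p.1 → MeasurableSet U →
      ε * (lam01 (V p.1)).toReal ≤ (lam01 U).toReal →
      ∀ T : Set (SigmaSp Ω), T ⊆ S p.2 → MeasurableSet T →
      ε * ((μ : Measure (SigmaSp Ω)) (S p.2)).toReal ≤ ((μ : Measure (SigmaSp Ω)) T).toReal →
      tv Ω (fun ω => condAvg Ω μ T U ω - condAvg Ω μ (S p.2) (V p.1) ω) < ε)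

/-- `(V, S)` refines `(V₀, S₀)`. -/
def Refines {K L K₀ L₀ : ℕ} (V : Fin K → Set ℝ) (S : Fin L → Set (SigmaSp Ω))
    (V₀ : Fin K₀ → Set ℝ) (S₀ : Fin L₀ → Set (SigmaSp Ω)) : Prop :=
  (∀ i, ∃ i₀, V i ⊆ V₀ i₀) ∧ (∀ j, ∃ j₀, S j ⊆ S₀ j₀)



theorem cell_ineq {H : Type*} [NormedAddCommGroup H] [InnerProductSpace ℝ H] (a b : H) (p q C : ℝ)
    (hp : 0 ≤ p) (hq : 0 ≤ q) (ha : ‖a‖ ≤ C * p) (hb : ‖b‖ ≤ C * q) :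
    ‖a + b‖ ^ 2 / (p + q) + ‖a - (p / (p + q)) • (a + b)‖ ^ 2 / p ≤ ‖a‖ ^ 2 / p + ‖b‖ ^ 2 / q := by
  rcases hp.eq_or_lt with rfl | hp
  · have : a = 0 := by simpa using ha
    subst this; simp
  rcases hq.eq_or_lt with rfl | hq
  · have : b = 0 := by simpa using hb
    subst this
    simp [hp.ne']
  have e : a - (p / (p + q)) • (a + b) = (1 / (p + q)) • (q • a - p • b) := by
    have : p + q ≠ 0 := by positivity
    rw [smul_add, smul_sub, smul_smul, smul_smul]
    have h1 : a = (p/(p+q)) • a + (1 / (p+q) * q) • a := by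
      rw [← add_smul]
      have : p/(p+q) + 1 / (p+q) * q = 1 := by field_simp
      rw [this, one_smul]
    have h2 : 1/(p+q)*p = p/(p+q) := by ring
    rw [h2]
    nth_rewrite 1 [h1]
    abel
  rw [e, norm_smul, mul_pow, norm_sub_sq_real, norm_add_sq_real, norm_smul, norm_smul, inner_smul_left, inner_smul_right]
  simp only [Real.norm_eq_abs, mul_pow, sq_abs, conj_trivial]
  have key := norm_sub_sq_real (q • a) (p • b)
  rw [norm_smul, norm_smul, inner_smul_left, inner_smul_right] at key
  simp only [Real.norm_eq_abs, mul_pow, sq_abs, conj_trivial] at key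
  have hn : 0 ≤ ‖q • a - p • b‖^2 := by positivity
  rw [key] at hn
  set x := ‖a‖; set y := ‖b‖; set z := inner ℝ a b
  have : x ^ 2 / p + y ^ 2 / q - ((x ^ 2 + 2 * z + y ^ 2) / (p + q) + (1 / (p + q)) ^ 2 * (q ^ 2 * x ^ 2 - 2 * (q * (p * z)) + p ^ 2 * y ^ 2) / p)
     = (q ^ 2 * x ^ 2 - 2 * (q * (p * z)) + p ^ 2 * y ^ 2) / (q * (p+q)^2) := by
    field_simp
    ring
  have h2 : 0 ≤ (q ^ 2 * x ^ 2 - 2 * (q * (p * z)) + p ^ 2 * y ^ 2) / (q * (p+q)^2) := by positivity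
  linarith

theorem sum_two_mul (g : ℕ → ℝ) (M : ℕ) :
    ∑ i ∈ Finset.range (2 * M), g i = ∑ i ∈ Finset.range M, (g (2 * i + 1) + g (2 * i)) := by
  induction M with
  | zero => simp
  | succ n ih =>
    rw [Finset.sum_range_succ, ← ih, show 2 * (n+1) = 2 * n + 1 + 1 by ring,
      Finset.sum_range_succ, Finset.sum_range_succ]
    ring

section
variable {X : Type*} [MeasurableSpace X] {H : Type*} [NormedAddCommGroup H] [InnerProductSpace ℝ H]

theorem sum_cells (μ : Measure X) [IsProbabilityMeasure μ] (j : X → ℕ) (hj : Measurable j) (M : ℕ)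
    (hM : ∀ x, j x < M) (T : Set X) (hT : MeasurableSet T) :
    ∑ i ∈ Finset.range M, μ.real (T ∩ j ⁻¹' {i}) = μ.real T := by
  rw [← measureReal_biUnion_finset]
  · congr 1; ext x; simp only [Set.mem_iUnion, Finset.mem_range, Set.mem_inter_iff, Set.mem_preimage, Set.mem_singleton_iff]
    constructor
    · rintro ⟨i, _, h, _⟩; exact h
    · intro h; exact ⟨j x, hM x, h, rfl⟩
  · intro a _ b _ hab
    refine Set.disjoint_left.2 ?_
    rintro x ⟨_, h1⟩ ⟨_, h2⟩
    exact hab (h1.symm.trans h2)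
  · intro i _
    exact hT.inter (hj (measurableSet_singleton i))

theorem hsum_cells (h : Set X → H) (h0 : h ∅ = 0)
    (hadd : ∀ P R, MeasurableSet P → MeasurableSet R → Disjoint P R → h (P ∪ R) = h P + h R)
    (j : X → ℕ) (hj : Measurable j) (T : Set X) (hT : MeasurableSet T) (M : ℕ) :
    h (T ∩ j ⁻¹' (Set.Iio M)) = ∑ i ∈ Finset.range M, h (T ∩ j ⁻¹' {i}) := by
  induction M with
  | zero => simp [h0]
  | succ n ih =>
    rw [Finset.sum_range_succ, ← ih, ← hadd]
    · congr 1; ext x; simp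
      rw [← and_or_left, Nat.le_iff_lt_or_eq]
    · exact hT.inter (hj measurableSet_Iio)
    · exact hT.inter (hj (measurableSet_singleton n))
    · refine Set.disjoint_left.2 ?_
      rintro x ⟨_, h1⟩ ⟨_, h2⟩
      simp at h1 h2; omega

/-- deviation -/
noncomputable def dev (μ : Measure X) (h : Set X → H) (j : X → ℕ) (M : ℕ) (T : Set X) : H :=
  h T - ∑ i ∈ Finset.range M, (μ.real (T ∩ j ⁻¹' {i}) / μ.real (j ⁻¹' {i})) • h (j ⁻¹' {i})

/-- energy -/
noncomputable def energy (μ : Measure X) (h : Set X → H) (j : X → ℕ) (M : ℕ) : ℝ :=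
  ∑ i ∈ Finset.range M, ‖h (j ⁻¹' {i})‖ ^ 2 / μ.real (j ⁻¹' {i})

open scoped Classical in
theorem energy_step (μ : Measure X) [IsProbabilityMeasure μ] (h : Set X → H) (C : ℝ)
    (hb : ∀ P, ‖h P‖ ≤ C * μ.real P)
    (hadd : ∀ P R, MeasurableSet P → MeasurableSet R → Disjoint P R → h (P ∪ R) = h P + h R)
    (j : X → ℕ) (hj : Measurable j) (M : ℕ) (hM : ∀ x, j x < M) (T : Set X) (hT : MeasurableSet T) :
    energy μ h j M + ‖dev μ h j M T‖ ^ 2 ≤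
      energy μ h (fun x => 2 * j x + if x ∈ T then 1 else 0) (2 * M) := by
  have h0 : h ∅ = 0 := by simpa using hb ∅
  set j' : X → ℕ := fun x => 2 * j x + if x ∈ T then 1 else 0
  have c1 : ∀ i, j' ⁻¹' {2 * i + 1} = T ∩ j ⁻¹' {i} := by
    intro i; ext x; simp only [j', Set.mem_preimage, Set.mem_singleton_iff, Set.mem_inter_iff]
    by_cases hx : x ∈ T <;> simp [hx] <;> omega
  have c2 : ∀ i, j' ⁻¹' {2 * i} = j ⁻¹' {i} \ T := by
    intro i; ext x; simp only [j', Set.mem_preimage, Set.mem_singleton_iff, Set.mem_sdiff]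
    by_cases hx : x ∈ T <;> simp [hx] <;> omega
  have hA : ∀ i, MeasurableSet (j ⁻¹' {i}) := fun i => hj (measurableSet_singleton i)
  have un : ∀ i, (T ∩ j ⁻¹' {i}) ∪ (j ⁻¹' {i} \ T) = j ⁻¹' {i} := by
    intro i; ext x; simp; tauto
  have dj : ∀ i, Disjoint (T ∩ j ⁻¹' {i}) (j ⁻¹' {i} \ T) := by
    intro i; refine Set.disjoint_left.2 ?_; rintro x ⟨h1, _⟩ ⟨_, h2⟩; exact h2 h1
  have hh : ∀ i, h (j ⁻¹' {i}) = h (T ∩ j ⁻¹' {i}) + h (j ⁻¹' {i} \ T) := by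
    intro i; rw [← hadd _ _ (hT.inter (hA i)) ((hA i).diff hT) (dj i), un]
  have hm : ∀ i, μ.real (j ⁻¹' {i}) = μ.real (T ∩ j ⁻¹' {i}) + μ.real (j ⁻¹' {i} \ T) := by
    intro i; rw [← measureReal_union (dj i) ((hA i).diff hT), un]
  set d : ℕ → H := fun i => h (T ∩ j ⁻¹' {i}) -
    (μ.real (T ∩ j ⁻¹' {i}) / μ.real (j ⁻¹' {i})) • h (j ⁻¹' {i}) with hd
  have hdev : dev μ h j M T = ∑ i ∈ Finset.range M, d i := by
    rw [dev, hd, Finset.sum_sub_distrib, ← hsum_cells h h0 hadd j hj T hT]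
    congr 2
    ext x; simp [hM x]
  have cell : ∀ i, ‖h (j ⁻¹' {i})‖ ^ 2 / μ.real (j ⁻¹' {i}) + ‖d i‖ ^ 2 / μ.real (T ∩ j ⁻¹' {i}) ≤
      ‖h (j' ⁻¹' {2 * i + 1})‖ ^ 2 / μ.real (j' ⁻¹' {2 * i + 1}) +
      ‖h (j' ⁻¹' {2 * i})‖ ^ 2 / μ.real (j' ⁻¹' {2 * i}) := by
    intro i
    rw [c1, c2]
    have := cell_ineq (h (T ∩ j ⁻¹' {i})) (h (j ⁻¹' {i} \ T)) _ _ C measureReal_nonneg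
      measureReal_nonneg (hb _) (hb _)
    rw [← hh, ← hm] at this
    exact this
  have cs : ‖dev μ h j M T‖ ^ 2 ≤ ∑ i ∈ Finset.range M, ‖d i‖ ^ 2 / μ.real (T ∩ j ⁻¹' {i}) := by
    calc ‖dev μ h j M T‖ ^ 2 ≤ (∑ i ∈ Finset.range M, ‖d i‖) ^ 2 := by
          rw [hdev]; gcongr; exact norm_sum_le _ _
      _ ≤ (∑ i ∈ Finset.range M, ‖d i‖ ^ 2 / μ.real (T ∩ j ⁻¹' {i})) *
          ∑ i ∈ Finset.range M, μ.real (T ∩ j ⁻¹' {i}) := by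
          apply Finset.sum_sq_le_sum_mul_sum_of_sq_le_mul
          · intro i _; positivity
          · intro i _; positivity
          · intro i _
            by_cases hz : μ.real (T ∩ j ⁻¹' {i}) = 0
            · have : h (T ∩ j ⁻¹' {i}) = 0 := by simpa [hz] using hb (T ∩ j ⁻¹' {i})
              simp [hd, hz, this]
            · apply le_of_eq; field_simp
      _ ≤ (∑ i ∈ Finset.range M, ‖d i‖ ^ 2 / μ.real (T ∩ j ⁻¹' {i})) * 1 := by
          rw [sum_cells μ j hj M hM T hT]
          gcongr
          exact measureReal_le_one
      _ = _ := mul_one _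
  calc _ ≤ _ := add_le_add_right cs _
    _ ≤ _ := by
      rw [energy, energy, sum_two_mul, ← Finset.sum_add_distrib]
      exact Finset.sum_le_sum fun i _ => cell i

theorem energy_le (μ : Measure X) [IsProbabilityMeasure μ] (h : Set X → H) (C : ℝ)
    (hb : ∀ P, ‖h P‖ ≤ C * μ.real P)
    (j : X → ℕ) (hj : Measurable j) (M : ℕ) (hM : ∀ x, j x < M) :
    energy μ h j M ≤ C ^ 2 := by
  calc _ ≤ ∑ i ∈ Finset.range M, C ^ 2 * μ.real (univ ∩ j ⁻¹' {i}) := by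
        refine Finset.sum_le_sum fun i _ => ?_
        rw [univ_inter]
        have hp : 0 ≤ μ.real (j ⁻¹' {i}) := measureReal_nonneg
        rcases hp.eq_or_lt with hz | hz
        · rw [← hz]; simp
        · rw [div_le_iff₀ hz]
          calc _ ≤ (C * μ.real (j ⁻¹' {i}))^2 := by gcongr; exact hb _
            _ = _ := by ring
    _ = C ^ 2 := by
      rw [← Finset.mul_sum, sum_cells μ j hj M hM _ MeasurableSet.univ]; simp

theorem regularity (C δ : ℝ) (hδ : 0 < δ) : ∃ N : ℕ, 0 < N ∧
    ∀ (μ : Measure X) [IsProbabilityMeasure μ] (h : Set X → H), (∀ P, ‖h P‖ ≤ C * μ.real P) →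
    (∀ P R, MeasurableSet P → MeasurableSet R → Disjoint P R → h (P ∪ R) = h P + h R) →
    ∃ j : X → ℕ, Measurable j ∧ (∀ x, j x < N) ∧ ∀ T, MeasurableSet T → ‖dev μ h j N T‖ ≤ δ := by
  classical
  obtain ⟨n, hn⟩ := exists_nat_gt (C ^ 2 / δ ^ 2)
  refine ⟨2 ^ n, by positivity, ?_⟩
  intro μ _ h hb hadd
  have h0 : h ∅ = 0 := by simpa using hb ∅
  by_contra! hcon
  have step : ∀ k ≤ n, ∃ j : X → ℕ, Measurable j ∧ (∀ x, j x < 2 ^ k) ∧ k * δ ^ 2 ≤ energy μ h j (2 ^ k) := by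
    intro k
    induction k with
    | zero =>
      intro _
      refine ⟨fun _ => 0, measurable_const, fun _ => by simp, ?_⟩
      rw [energy]; simp
    | succ k ih =>
      intro hk
      obtain ⟨j, hj, hM, he⟩ := ih (by omega)
      have hle : 2 ^ k ≤ 2 ^ n := Nat.pow_le_pow_right (by norm_num) (by omega)
      obtain ⟨T, hT, hlt⟩ := hcon j hj (fun x => (hM x).trans_le hle)
      have hdev : dev μ h j (2 ^ n) T = dev μ h j (2 ^ k) T := by
        rw [dev, dev]; congr 1; symm
        apply Finset.sum_subset
        · intro i; simp; omega
        · intro i _ hi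
          have : j ⁻¹' {i} = ∅ := by
            ext x; simp at hi ⊢; have := hM x; omega
          rw [this, h0, smul_zero]
      rw [hdev] at hlt
      refine ⟨fun x => 2 * j x + if x ∈ T then 1 else 0, ?_, ?_, ?_⟩
      · exact (measurable_const.mul hj).add (Measurable.ite hT measurable_const measurable_const)
      · intro x; have := hM x; rw [pow_succ]; dsimp only; split_ifs <;> omega
      · have := energy_step μ h C hb hadd j hj _ hM T hT
        rw [pow_succ 2 k, mul_comm (2 ^ k) 2]
        refine le_trans ?_ this
        push_cast
        have : δ ^ 2 ≤ ‖dev μ h j (2 ^ k) T‖ ^ 2 := by gcongr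
        linarith
  obtain ⟨j, hj, hM, he⟩ := step n le_rfl
  have := energy_le μ h C hb j hj _ hM
  rw [div_lt_iff₀ (by positivity)] at hn
  linarith
end

theorem univ_lam : measureUnivNNReal lam01 = 1 := by
  apply ENNReal.coe_injective
  rw [coe_measureUnivNNReal]; simp

theorem isClosed_sig (Ω : Type) [Fintype Ω] :
    IsClosed {f : Lp (Ω → ℝ) 1 lam01 | ∀ᵐ x ∂lam01, f x ∈ simplex Ω} := by
  have hs : IsClosed (simplex Ω) := by
    have : simplex Ω = stdSimplex ℝ Ω := rfl
    rw [this]; exact isClosed_stdSimplex ℝ Ω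
  refine IsSeqClosed.isClosed ?_
  intro u f hu hf
  obtain ⟨φ, -, hφ⟩ := (tendstoInMeasure_of_tendsto_Lp hf).exists_seq_tendsto_ae
  have := ae_all_iff.2 hu
  filter_upwards [hφ, this] with x h1 h2
  exact hs.mem_of_tendsto h1 (Eventually.of_forall fun n => h2 _)

theorem convex_sig (Ω : Type) [Fintype Ω] :
    Convex ℝ {f : Lp (Ω → ℝ) 1 lam01 | ∀ᵐ x ∂lam01, f x ∈ simplex Ω} := by
  have hs : Convex ℝ (simplex Ω) := convex_stdSimplex ℝ Ω
  intro f hf g hg a b ha hb hab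
  simp only [mem_ofPred_eq] at hf hg ⊢
  filter_upwards [hf, hg, Lp.coeFn_add (a • f) (b • g), Lp.coeFn_smul a f, Lp.coeFn_smul b g]
    with x h1 h2 h3 h4 h5
  rw [h3, Pi.add_apply, h4, h5]
  exact hs h1 h2 ha hb hab

theorem continuous_val (Ω : Type) [Fintype Ω] :
    Continuous (fun f : SigmaSp Ω => (f.1 : Lp (Ω → ℝ) 1 lam01)) := by
  exact continuous_subtype_val

theorem simplex_le {Ω : Type} [Fintype Ω] {p : Ω → ℝ} (hp : p ∈ simplex Ω) (ω : Ω) : |p ω| ≤ 1 := by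
  rw [abs_of_nonneg (hp.1 ω), ← hp.2]
  exact Finset.single_le_sum (f := p) (fun i _ => hp.1 i) (Finset.mem_univ ω)

theorem norm_val_le (Ω : Type) [Fintype Ω] (f : SigmaSp Ω) : ‖f.1‖ ≤ 1 := by
  have h := Lp.norm_le_of_ae_bound (f := f.1) (C := 1) zero_le_one (by
    filter_upwards [f.2] with x hx
    refine (pi_norm_le_iff_of_nonneg zero_le_one).2 fun ω => ?_
    exact simplex_le hx ω)
  have hu := univ_lam
  simpa [hu] using h

theorem integrable_val (Ω : Type) [Fintype Ω] (μ : Measure (SigmaSp Ω)) [IsFiniteMeasure μ] :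
    Integrable (fun f : SigmaSp Ω => (f.1 : Lp (Ω → ℝ) 1 lam01)) μ := by
  have : Fact ((1 : ENNReal) ≠ ⊤) := ⟨by simp⟩
  refine Integrable.of_bound (C := 1) ?_ (Eventually.of_forall fun f => norm_val_le Ω f)
  have hc : Continuous (fun f : SigmaSp Ω => (f.1 : Lp (Ω → ℝ) 1 lam01)) := continuous_val Ω
  exact hc.aestronglyMeasurable

/-- set integral functional -/
def Lam (Ω : Type) [Fintype Ω] (U : Set ℝ) (ω : Ω) : Lp (Ω → ℝ) 1 lam01 →L[ℝ] ℝ :=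
  (ContinuousLinearMap.proj (R := ℝ) (φ := fun _ : Ω => ℝ) ω).comp
  { toFun := fun f => ∫ x in U, f x ∂lam01
    map_add' := by
      intro f g
      rw [← integral_add (L1.integrable_coeFn f).restrict (L1.integrable_coeFn g).restrict]
      exact integral_congr_ae (ae_restrict_of_ae (Lp.coeFn_add f g))
    map_smul' := by
      intro c f
      rw [RingHom.id_apply, ← integral_smul]
      exact integral_congr_ae (ae_restrict_of_ae (Lp.coeFn_smul c f))
    cont := continuous_setIntegral U }

theorem Lam_apply (Ω : Type) [Fintype Ω] (U : Set ℝ) (ω : Ω) (f : Lp (Ω → ℝ) 1 lam01) :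
    Lam Ω U ω f = ∫ x in U, f x ω ∂lam01 := by
  have : Lam Ω U ω f = (∫ x in U, f x ∂lam01) ω := rfl
  rw [this, eval_integral]
  intro i
  exact Integrable.eval (L1.integrable_coeFn f).restrict i

theorem exists_avg (Ω : Type) [Fintype Ω] (μ : Measure (SigmaSp Ω)) [IsProbabilityMeasure μ]
    (T : Set (SigmaSp Ω)) :
    ∃ σ : SigmaSp Ω, ∫ f in T, f.1 ∂μ = μ.real T • σ.1 := by
  by_cases h0 : μ T = 0
  · have : Nonempty (SigmaSp Ω) := nonempty_of_isProbabilityMeasure μ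
    refine ⟨Classical.arbitrary _, ?_⟩
    rw [Measure.restrict_eq_zero.2 h0, measureReal_def, h0]; simp
  · have := (convex_sig Ω).set_average_mem (isClosed_sig Ω) h0 (measure_ne_top μ T)
      (f := fun f : SigmaSp Ω => (f.1 : Lp (Ω → ℝ) 1 lam01))
      (Eventually.of_forall fun f => f.2) (integrable_val Ω μ).integrableOn
    refine ⟨⟨_, this⟩, ?_⟩
    change _ = μ.real T • (⨍ x in T, x.1 ∂μ)
    rw [setAverage_eq, smul_smul, mul_inv_cancel₀, one_smul]
    rw [measureReal_def]
    exact (ENNReal.toReal_pos h0 (measure_ne_top μ T)).ne'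

/-- average -/
def avgS (Ω : Type) [Fintype Ω] (μ : Measure (SigmaSp Ω)) [IsProbabilityMeasure μ]
    (T : Set (SigmaSp Ω)) : SigmaSp Ω := (exists_avg Ω μ T).choose

theorem avgS_spec (Ω : Type) [Fintype Ω] (μ : Measure (SigmaSp Ω)) [IsProbabilityMeasure μ]
    (T : Set (SigmaSp Ω)) : ∫ f in T, f.1 ∂μ = μ.real T • (avgS Ω μ T).1 :=
  (exists_avg Ω μ T).choose_spec

theorem memLp_coord (Ω : Type) [Fintype Ω] (f : SigmaSp Ω) (ω : Ω) :
    MemLp (fun x => f.1 x ω) 2 lam01 := by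
  refine MemLp.of_bound (C := 1) ?_ ?_
  · exact (Integrable.eval (L1.integrable_coeFn f.1) ω).aestronglyMeasurable
  · filter_upwards [f.2] with x hx
    exact simplex_le hx ω

/-- embedding in the Hilbert space -/
def toH (Ω : Type) [Fintype Ω] (f : SigmaSp Ω) : PiLp 2 (fun _ : Ω => Lp ℝ 2 lam01) :=
  WithLp.toLp 2 (fun ω => (memLp_coord Ω f ω).toLp _)

theorem toH_norm (Ω : Type) [Fintype Ω] (f : SigmaSp Ω) :
    ‖toH Ω f‖ ≤ √(Fintype.card Ω) := by
  rw [PiLp.norm_eq_of_L2]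
  apply Real.sqrt_le_sqrt
  have : ∀ ω, ‖toH Ω f ω‖ ≤ 1 := by
    intro ω
    have h := Lp.norm_le_of_ae_bound (f := toH Ω f ω) (C := 1) zero_le_one (by
      filter_upwards [f.2, (memLp_coord Ω f ω).coeFn_toLp] with x hx h2
      change ‖((memLp_coord Ω f ω).toLp _ : ℝ → ℝ) x‖ ≤ 1
      rw [h2]
      exact simplex_le hx ω)
    have hu := univ_lam
    simpa [hu] using h
  calc _ ≤ ∑ ω : Ω, (1 : ℝ) := Finset.sum_le_sum fun ω _ => by
        have := this ω
        exact pow_le_one₀ (norm_nonneg _) this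
    _ = _ := by simp

theorem inner_toH (Ω : Type) [Fintype Ω] (f : SigmaSp Ω) (U : Set ℝ) (hU : MeasurableSet U) (ω : Ω) :
    inner ℝ (indicatorConstLp 2 hU (measure_ne_top lam01 U) (1 : ℝ)) (toH Ω f ω) = Lam Ω U ω f.1 := by
  rw [L2.inner_indicatorConstLp_one, Lam_apply]
  exact integral_congr_ae (ae_restrict_of_ae (memLp_coord Ω f ω).coeFn_toLp)

theorem inner_bound (U : Set ℝ) (hU : MeasurableSet U) (v : Lp ℝ 2 lam01) :
    |inner ℝ (indicatorConstLp 2 hU (measure_ne_top lam01 U) (1 : ℝ)) v| ≤ ‖v‖ := by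
  refine (abs_real_inner_le_norm _ _).trans ?_
  have : ‖indicatorConstLp 2 hU (measure_ne_top lam01 U) (1 : ℝ)‖ ≤ 1 := by
    rw [norm_indicatorConstLp (by simp) (by simp)]
    simp only [norm_one, one_mul]
    exact Real.rpow_le_one measureReal_nonneg measureReal_le_one (by positivity)
  nlinarith [norm_nonneg v]

theorem Lam_setIntegral (Ω : Type) [Fintype Ω] (μ : Measure (SigmaSp Ω)) [IsProbabilityMeasure μ]
    (T : Set (SigmaSp Ω)) (U : Set ℝ) (ω : Ω) :
    ∫ f in T, Lam Ω U ω f.1 ∂μ = μ.real T * Lam Ω U ω (avgS Ω μ T).1 := by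
  rw [ContinuousLinearMap.integral_comp_comm _ (integrable_val Ω μ).integrableOn, avgS_spec, map_smul,
    smul_eq_mul]

theorem toH_add (Ω : Type) [Fintype Ω] (μ : Measure (SigmaSp Ω)) [IsProbabilityMeasure μ]
    (P R : Set (SigmaSp Ω)) (_hP : MeasurableSet P) (hR : MeasurableSet R) (hPR : Disjoint P R) :
    μ.real (P ∪ R) • toH Ω (avgS Ω μ (P ∪ R)) =
      μ.real P • toH Ω (avgS Ω μ P) + μ.real R • toH Ω (avgS Ω μ R) := by
  have e : μ.real (P ∪ R) • (avgS Ω μ (P ∪ R)).1 =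
      μ.real P • (avgS Ω μ P).1 + μ.real R • (avgS Ω μ R).1 := by
    rw [← avgS_spec, ← avgS_spec, ← avgS_spec]
    exact setIntegral_union hPR hR (integrable_val Ω μ).integrableOn (integrable_val Ω μ).integrableOn
  have key : ∀ (a b c : ℝ) (f g k : SigmaSp Ω), a • f.1 = b • g.1 + c • k.1 →
      a • toH Ω f = b • toH Ω g + c • toH Ω k := by
    intro a b c f g k h
    ext1 ω
    change a • (memLp_coord Ω f ω).toLp _ = b • (memLp_coord Ω g ω).toLp _ + c • (memLp_coord Ω k ω).toLp _
    rw [← MemLp.toLp_const_smul, ← MemLp.toLp_const_smul, ← MemLp.toLp_const_smul, ← MemLp.toLp_add]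
    rw [MemLp.toLp_eq_toLp_iff]
    have h1 : (a • f.1 : Lp (Ω → ℝ) 1 lam01) =ᵐ[lam01] (b • g.1 + c • k.1 : Lp (Ω → ℝ) 1 lam01) := by
      rw [h]
    filter_upwards [h1, Lp.coeFn_smul a f.1, Lp.coeFn_add (b • g.1) (c • k.1),
      Lp.coeFn_smul b g.1, Lp.coeFn_smul c k.1] with x h1 h2 h3 h4 h5
    rw [h2, h3] at h1
    simp only [Pi.add_apply, h4, h5, Pi.smul_apply] at h1
    have := congrFun h1 ω
    simpa using this
  exact key _ _ _ _ _ _ e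

theorem map_finite (Ω : Type) [Fintype Ω] (μ : Measure (SigmaSp Ω)) [IsProbabilityMeasure μ]
    (N : ℕ) (j : SigmaSp Ω → ℕ) (hj : Measurable j) (hN : ∀ x, j x < N) (σ : ℕ → SigmaSp Ω) :
    μ.map (fun f => σ (j f)) =
      ∑ i : Fin N, ENNReal.ofReal (μ.real (j ⁻¹' {(i : ℕ)})) • Measure.dirac (σ i) := by
  have hσ : Measurable σ := measurable_from_top
  have hm : Measurable (fun f => σ (j f)) := hσ.comp hj
  ext s hs
  rw [Measure.map_apply hm hs, Measure.finsetSum_apply]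
  have h1 := sum_cells μ j hj N hN _ (hm hs)
  rw [← ofReal_measureReal, ← h1, ENNReal.ofReal_sum_of_nonneg (fun _ _ => measureReal_nonneg),
    Finset.sum_range]
  refine Finset.sum_congr rfl fun i _ => ?_
  rw [Measure.smul_apply, smul_eq_mul, Measure.dirac_apply' _ hs]
  by_cases hi : σ i ∈ s
  · rw [Set.indicator_of_mem hi, Pi.one_apply, mul_one]
    congr 2
    ext f
    simp only [Set.mem_inter_iff, Set.mem_preimage, Set.mem_singleton_iff]
    constructor
    · exact fun h => h.2
    · intro h; rw [h]; exact ⟨hi, rfl⟩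
  · rw [Set.indicator_of_notMem hi, mul_zero]
    have : (fun f => σ (j f)) ⁻¹' s ∩ j ⁻¹' {(i : ℕ)} = ∅ := by
      ext f
      simp only [Set.mem_inter_iff, Set.mem_preimage, Set.mem_singleton_iff, Set.mem_empty_iff_false,
        iff_false, not_and]
      intro h1 h2
      rw [h2] at h1; exact hi h1
    rw [this]; simp

theorem cut_bound (Ω : Type) [Fintype Ω] (μ : Measure (SigmaSp Ω)) [IsProbabilityMeasure μ]
    (N : ℕ) (j : SigmaSp Ω → ℕ) (hj : Measurable j) (hN : ∀ x, j x < N) (δ : ℝ)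
    (hdev : ∀ T, MeasurableSet T →
      ‖dev μ (fun P => μ.real P • toH Ω (avgS Ω μ P)) j N T‖ ≤ δ)
    (T : Set (SigmaSp Ω)) (hT : MeasurableSet T) (U : Set ℝ) (hU : MeasurableSet U) (ω : Ω) :
    |∫ f in T, (Lam Ω U ω f.1 - Lam Ω U ω (avgS Ω μ (j ⁻¹' {j f})).1) ∂μ| ≤ δ := by
  set σ : ℕ → SigmaSp Ω := fun i => avgS Ω μ (j ⁻¹' {i})
  have hA : ∀ i, MeasurableSet (j ⁻¹' {i}) := fun i => hj (measurableSet_singleton i)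
  have hm : Measurable fun f => Lam Ω U ω (σ (j f)).1 :=
    (measurable_from_top (f := fun i : ℕ => Lam Ω U ω (σ i).1)).comp hj
  have hbd : ∀ f : SigmaSp Ω, ‖Lam Ω U ω f.1‖ ≤ ‖Lam Ω U ω‖ := fun f =>
    (ContinuousLinearMap.le_opNorm _ _).trans
      (mul_le_of_le_one_right (norm_nonneg _) (norm_val_le Ω f))
  have hi1 : Integrable (fun f : SigmaSp Ω => Lam Ω U ω f.1) μ :=
    ContinuousLinearMap.integrable_comp _ (integrable_val Ω μ)
  have hi2 : Integrable (fun f : SigmaSp Ω => Lam Ω U ω (σ (j f)).1) μ :=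
    Integrable.of_bound hm.aestronglyMeasurable _ (Eventually.of_forall fun f => hbd _)
  have e2 : ∫ f in T, Lam Ω U ω (σ (j f)).1 ∂μ =
      ∑ i ∈ Finset.range N, μ.real (T ∩ j ⁻¹' {i}) * Lam Ω U ω (σ i).1 := by
    have hT' : T = ⋃ i ∈ Finset.range N, (T ∩ j ⁻¹' {i}) := by
      ext x
      simp only [Set.mem_iUnion, Finset.mem_range, Set.mem_inter_iff, Set.mem_preimage,
        Set.mem_singleton_iff]
      constructor
      · intro h; exact ⟨j x, hN x, h, rfl⟩
      · rintro ⟨i, _, h, _⟩; exact h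
    conv_lhs => rw [hT']
    rw [integral_biUnion_finset]
    · refine Finset.sum_congr rfl fun i _ => ?_
      rw [setIntegral_congr_fun (g := fun _ => Lam Ω U ω (σ i).1) (hT.inter (hA i))]
      · simp
      · rintro f ⟨_, hf⟩
        simp only [Set.mem_preimage, Set.mem_singleton_iff] at hf
        simp only [hf]
    · intro i _; exact hT.inter (hA i)
    · intro a _ b _ hab
      refine Set.disjoint_left.2 ?_
      rintro x ⟨_, h1⟩ ⟨_, h2⟩
      exact hab (h1.symm.trans h2)
    · intro i _; exact hi2.integrableOn
  rw [integral_sub hi1.integrableOn hi2.integrableOn, e2, Lam_setIntegral]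
  refine le_trans ?_ (hdev T hT)
  refine le_trans ?_ (PiLp.norm_apply_le _ ω)
  refine le_trans (le_of_eq ?_) (inner_bound U hU _)
  congr 1
  have e3 : ∀ i, (μ.real (T ∩ j ⁻¹' {i}) / μ.real (j ⁻¹' {i})) •
      (μ.real (j ⁻¹' {i}) • toH Ω (avgS Ω μ (j ⁻¹' {i}))) =
      μ.real (T ∩ j ⁻¹' {i}) • toH Ω (σ i) := by
    intro i
    rw [smul_smul]
    by_cases hz : μ.real (j ⁻¹' {i}) = 0
    · have : μ.real (T ∩ j ⁻¹' {i}) = 0 :=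
        le_antisymm (hz ▸ measureReal_mono inter_subset_right) measureReal_nonneg
      rw [hz, this]; simp
    · rw [div_mul_cancel₀ _ hz]
  simp only [dev, e3]
  simp only [PiLp.sub_apply, WithLp.ofLp_sum, Finset.sum_apply, PiLp.smul_apply, inner_sub_right, inner_sum, inner_smul_right, inner_toH]

theorem exists_approx (Ω : Type) [Fintype Ω] (μ ν : PM Ω) (N : ℕ) (j : SigmaSp Ω → ℕ)
    (hj : Measurable j) (δ : ℝ) (hδ : 0 ≤ δ) (σ : ℕ → SigmaSp Ω)
    (hν : (ν : Measure (SigmaSp Ω)) = (μ : Measure (SigmaSp Ω)).map (fun f => σ (j f)))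
    (hc : ∀ T : Set (SigmaSp Ω), MeasurableSet T → ∀ U : Set ℝ, MeasurableSet U → ∀ ω,
      |∫ f in T, (Lam Ω U ω f.1 - Lam Ω U ω (σ (j f)).1) ∂(μ : Measure (SigmaSp Ω))| ≤ δ) :
    CutD Ω μ ν ≤ Fintype.card Ω * δ / 2 := by
  have hσ : Measurable σ := measurable_from_top
  have hg : Measurable (fun f : SigmaSp Ω => (f, σ (j f))) := measurable_id.prodMk (hσ.comp hj)
  set γ := (μ : Measure (SigmaSp Ω)).map (fun f : SigmaSp Ω => (f, σ (j f))) with hγ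
  have hγc : IsCoupling Ω μ ν γ := by
    constructor
    · rw [hγ, Measure.map_map measurable_fst hg]
      exact Measure.map_id
    · rw [hγ, Measure.map_map measurable_snd hg, hν]; rfl
  have hbdd : BddBelow (range fun γ : {γ // IsCoupling Ω μ ν γ} => cutPair Ω γ.1 id) := by
    refine ⟨0, ?_⟩
    rintro _ ⟨γ, rfl⟩
    refine Real.iSup_nonneg fun B => Real.iSup_nonneg fun _ => Real.iSup_nonneg fun U =>
      Real.iSup_nonneg fun _ => ?_
    unfold tv; positivity
  refine (ciInf_le hbdd ⟨γ, hγc⟩).trans ?_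
  have hnn : 0 ≤ Fintype.card Ω * δ / 2 := by positivity
  refine Real.iSup_le (fun B => Real.iSup_le (fun hB => Real.iSup_le (fun U =>
      Real.iSup_le (fun hU => ?_) hnn) hnn) hnn) hnn
  unfold tv
  have hone : ∀ ω, |∫ p in B, (∫ x in U, (ev Ω p.1 x ω - ev Ω p.2 (id x) ω) ∂lam01) ∂γ| ≤ δ := by
    intro ω
    have e1 : ∀ p : SigmaSp Ω × SigmaSp Ω, (∫ x in U, (ev Ω p.1 x ω - ev Ω p.2 (id x) ω) ∂lam01) =
        Lam Ω U ω p.1.1 - Lam Ω U ω p.2.1 := by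
      intro p
      rw [Lam_apply, Lam_apply]
      exact integral_sub (Integrable.eval (L1.integrable_coeFn p.1.1) ω).restrict
        (Integrable.eval (L1.integrable_coeFn p.2.1) ω).restrict
    simp only [e1]
    have hL : Measurable (fun f : SigmaSp Ω => Lam Ω U ω f.1) :=
      ((Lam Ω U ω).continuous.comp (continuous_val Ω)).measurable
    have hG : Measurable (fun p : SigmaSp Ω × SigmaSp Ω => Lam Ω U ω p.1.1 - Lam Ω U ω p.2.1) :=
      (hL.comp measurable_fst).sub (hL.comp measurable_snd)
    have e2 := setIntegral_map (μ := (μ : Measure (SigmaSp Ω))) hB hG.aestronglyMeasurable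
      hg.aemeasurable
    rw [hγ]
    refine (le_of_eq (congrArg _ e2)).trans ?_
    exact hc _ (hg hB) U hU ω
  have : ∑ ω, |∫ p in B, (∫ x in U, (ev Ω p.1 x ω - ev Ω p.2 (id x) ω) ∂lam01) ∂γ| ≤ Fintype.card Ω * δ := by
    calc _ ≤ ∑ ω : Ω, δ := Finset.sum_le_sum fun ω _ => hone ω
      _ = _ := by simp
  linarith

/-- **Statement 11** (Corollary). For any `ε > 0` there is `N = N(ε) > 0` such that every
probability measure `μ` on `Σ_Ω` is within `Cut□`-distance `ε` of a convex combination
`∑_{i=1}^N w_i δ_{σ_i}` of `N` Dirac measures. -/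
theorem approximation_by_finite_mixtures (Ω : Type) [Fintype Ω] :
    ∀ ε : ℝ, 0 < ε → ∃ N : ℕ, 0 < N ∧
      ∀ μ : PM Ω, ∃ (σ : Fin N → SigmaSp Ω) (w : Fin N → ℝ) (ν : PM Ω),
        (∀ i, 0 ≤ w i) ∧ (∑ i, w i = 1) ∧
        (ν : Measure (SigmaSp Ω)) =
          ∑ i : Fin N, ENNReal.ofReal (w i) • Measure.dirac (σ i) ∧
        CutD Ω μ ν < ε := by
  intro ε hε
  set δ : ℝ := ε / (Fintype.card Ω + 1) with hδ
  have hδ0 : 0 < δ := by positivity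
  obtain ⟨N, hN0, hN⟩ := regularity (X := SigmaSp Ω)
    (H := PiLp 2 (fun _ : Ω => Lp ℝ 2 lam01)) (√(Fintype.card Ω)) δ hδ0
  refine ⟨N, hN0, fun μ => ?_⟩
  obtain ⟨j, hj, hjN, hdev⟩ := hN (μ : Measure (SigmaSp Ω))
    (fun P => (μ : Measure (SigmaSp Ω)).real P • toH Ω (avgS Ω μ P))
    (fun P => by
      rw [norm_smul, mul_comm, Real.norm_of_nonneg measureReal_nonneg]
      gcongr
      exact toH_norm Ω _)
    (toH_add Ω μ)
  have hm : Measurable fun f => avgS Ω (μ : Measure (SigmaSp Ω)) (j ⁻¹' {j f}) :=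
    (measurable_from_top (f := fun i : ℕ => avgS Ω (μ : Measure (SigmaSp Ω)) (j ⁻¹' {i}))).comp hj
  refine ⟨fun i => avgS Ω μ (j ⁻¹' {(i : ℕ)}),
    fun i => (μ : Measure (SigmaSp Ω)).real (j ⁻¹' {(i : ℕ)}),
    ⟨(μ : Measure (SigmaSp Ω)).map (fun f => avgS Ω μ (j ⁻¹' {j f})),
      Measure.isProbabilityMeasure_map hm.aemeasurable⟩, fun i => measureReal_nonneg, ?_, ?_, ?_⟩
  · have := sum_cells (μ : Measure (SigmaSp Ω)) j hj N hjN univ MeasurableSet.univ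
    simp only [univ_inter, probReal_univ] at this
    rw [← this, Finset.sum_range]
  · exact map_finite Ω μ N j hj hjN (fun i => avgS Ω μ (j ⁻¹' {i}))
  · refine (exists_approx Ω μ _ N j hj δ hδ0.le (fun i => avgS Ω μ (j ⁻¹' {i})) rfl
      (fun T hT U hU ω => cut_bound Ω μ N j hj hjN δ hdev T hT U hU ω)).trans_lt ?_
    have h1 : (Fintype.card Ω : ℝ) * δ ≤ ε := by
      rw [hδ, mul_div_assoc', div_le_iff₀ (by positivity)]
      nlinarith
    linarith

end Paper
end
end
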